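/- There is C > 0 such that for every even integer n ≥ 2 and all x, y ∈ [−2·n^{2/3}, ∞) with x ≠ y, x ≠ 0, y ≠ 0: (i) |J₁ⁿ(x,y)| ≤ C·(Ĝ_{−1/4,1/4,1}(x,y) + |x|^{−1/4}); (ii) |∂_y J₁ⁿ(x,y)| ≤ C·(Ĝ_{−1/4,1/4,2}(x,y) + Ĝ_{−3/4,1/4,1}(x,y)), where ∂_y J₁ⁿ denotes the derivative in the second variable; (iii) |∫_x^y J₁ⁿ(u,x) du| ≤ C. -/

import Mathlib

open MeasureTheory Filter Set

noncomputable section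

/-- The Airy function `Ai(x) = (1/π)·lim_{b→∞} ∫_0^b cos(t³/3 + x·t) dt`. -/
def Ai (x : ℝ) : ℝ :=
  (1 / Real.pi) *
    limUnder Filter.atTop (fun b : ℝ => ∫ t in (0:ℝ)..b, Real.cos (t ^ 3 / 3 + x * t))

/-- The Airy kernel. -/
def KAi (x y : ℝ) : ℝ :=
  if x = y then (deriv Ai x) ^ 2 - x * (Ai x) ^ 2
  else (Ai x * deriv Ai y - deriv Ai x * Ai y) / (x - y)

/-- One-point correlation function of the Airy₂ random point field. -/
def rho (x : ℝ) : ℝ := (deriv Ai x) ^ 2 - x * (Ai x) ^ 2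

/-- Probabilists' Hermite polynomial `Ĥ_m(x) = (−1)^m e^{x²/2} (d/dx)^m e^{−x²/2}`. -/
def hermiteP (m : ℕ) (x : ℝ) : ℝ :=
  (-1 : ℝ) ^ m * Real.exp (x ^ 2 / 2) * iteratedDeriv m (fun t => Real.exp (-t ^ 2 / 2)) x

/-- Normalized oscillator function `φ_m`. -/
def osc (m : ℕ) (x : ℝ) : ℝ :=
  (2 * Real.pi) ^ (-(1:ℝ)/4) * ((m.factorial : ℝ)) ^ (-(1:ℝ)/2) *
    Real.exp (-x ^ 2 / 4) * hermiteP m x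

/-- `ψ_mⁿ(x) = n^{1/12}·φ_m(2√n + n^{−1/6}·x)`. -/
def psiUp (n m : ℕ) (x : ℝ) : ℝ :=
  (n : ℝ) ^ ((1:ℝ)/12) * osc m (2 * Real.sqrt n + (n : ℝ) ^ (-(1:ℝ)/6) * x)

/-- `ψ_n = ψ_nⁿ`. -/
def psiN (n : ℕ) : ℝ → ℝ := psiUp n n

/-- The finite-`n` Airy kernel. -/
def KAiN (n : ℕ) (x y : ℝ) : ℝ :=
  if x = y then
    (deriv (psiN n) x) ^ 2 - psiN n x * deriv (deriv (psiN n)) x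
      - (1 / (2 * (n : ℝ) ^ ((1:ℝ)/3))) * (psiN n x) ^ 2
  else
    (psiN n x * deriv (psiN n) y - deriv (psiN n) x * psiN n y) / (x - y)
      - (1 / (2 * (n : ℝ) ^ ((1:ℝ)/3))) * (psiN n x * psiN n y)

/-- `(εf)(x) = (1/2)·∫_ℝ sign(x − y)·f(y) dy`. -/
def epsF (f : ℝ → ℝ) (x : ℝ) : ℝ := (1/2) * ∫ y : ℝ, Real.sign (x - y) * f y

/-- `εψ_n`. -/
def epsPsi (n : ℕ) : ℝ → ℝ := epsF (psiN n)

/-- `J₁(x,y) = K_Ai(x,y) + (1/2)·Ai(x)·(1 − ∫_y^∞ Ai(u) du)`. -/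
def J1 (x y : ℝ) : ℝ := KAi x y + (1/2) * Ai x * (1 - ∫ u in Set.Ioi y, Ai u)

/-- Scalar part of the quaternion product of Airy₁ kernels. -/
def L1 (x y : ℝ) : ℝ :=
  J1 x y * J1 y x -
    deriv (fun v => J1 x v) y * ((∫ u in x..y, J1 u x) - (1/2) * Real.sign (y - x))

/-- `J₁ⁿ(x,y) = K_Aiⁿ(x,y) + (1/2)·ψ_{n−1}ⁿ(x)·(εψ_n)(y)`. -/
def J1N (n : ℕ) (x y : ℝ) : ℝ :=
  KAiN n x y + (1/2) * psiUp n (n - 1) x * epsPsi n y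

/-- Scalar part of the quaternion product of finite-`n` Airy₁ kernels. -/
def L1N (n : ℕ) (x y : ℝ) : ℝ :=
  J1N n x y * J1N n y x -
    deriv (fun v => J1N n x v) y * ((∫ u in x..y, J1N n u x) - (1/2) * Real.sign (y - x))

/-- `ρ̂(x) = (1/π)·√(−x)` for `x < 0`, and `0` otherwise. -/
def rhoHat (x : ℝ) : ℝ := if x < 0 then Real.sqrt (-x) / Real.pi else 0

/-- `ρ̂ⁿ(x) = (1/π)·√(−x·(1 + x/(4·n^{2/3})))` on `(−4n^{2/3}, 0)`, and `0` otherwise. -/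
def rhoHatN (n : ℕ) (x : ℝ) : ℝ :=
  if -(4 * (n : ℝ) ^ ((2:ℝ)/3)) < x ∧ x < 0 then
    Real.sqrt (-x * (1 + x / (4 * (n : ℝ) ^ ((2:ℝ)/3)))) / Real.pi
  else 0

/-- `G_{a,b,c}(x,y) = |x|^{−a}·|y|^{−b}·|x−y|^{−c}`. -/
def Gf (a b c : ℝ) (x y : ℝ) : ℝ := |x| ^ (-a) * |y| ^ (-b) * |x - y| ^ (-c)

/-- `Ĝ_{a,b,c}(x,y) = G_{a,b,c}(x,y) + G_{a,b,c}(y,x)`. -/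
def Ghat (a b c : ℝ) (x y : ℝ) : ℝ := Gf a b c x y + Gf a b c y x

/-- Soft-edge one-point correlation function of the `n`-point GUE ensemble. -/
def rhoN (n : ℕ) (x : ℝ) : ℝ :=
  (deriv (psiN n) x) ^ 2 - (x ^ 2 / (4 * (n : ℝ) ^ ((2:ℝ)/3)) + x) * (psiN n x) ^ 2

end

structure WK (N : ℝ) (ψ dψ Φ : ℝ → ℝ) : Prop where
  hN : 1 ≤ N
  h1 : ∀ x, HasDerivAt ψ (dψ x) x
  h2 : ∀ x, HasDerivAt dψ ((x + x ^ 2 / (4 * N ^ 2) - 1 / (2 * N)) * ψ x) x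
  h3 : ∀ x, HasDerivAt Φ (ψ x) x
  c1 : dψ (-(2 * N ^ 2)) = 0
  c2 : Φ (-(2 * N ^ 2)) = 0
  c3 : ψ (-(2 * N ^ 2)) ^ 2 ≤ 1 / N
  t1 : Tendsto (fun x => ψ x * dψ x) atTop (nhds 0)
  t2 : Tendsto (fun x => dψ x ^ 2 - (x + x ^ 2 / (4 * N ^ 2) - 1 / (2 * N)) * ψ x ^ 2) atTop (nhds 0)

lemma le_of_deriv_nonpos {f f' : ℝ → ℝ} {a b : ℝ} (hab : a ≤ b)
    (hf : ∀ x ∈ Icc a b, HasDerivAt f (f' x) x) (hn : ∀ x ∈ Icc a b, f' x ≤ 0) : f b ≤ f a := by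
  have : AntitoneOn f (Icc a b) := by
    apply antitoneOn_of_hasDerivWithinAt_nonpos (f' := f') (convex_Icc a b)
    · exact fun x hx => (hf x hx).continuousAt.continuousWithinAt
    · intro x hx
      exact (hf x (interior_subset hx)).hasDerivWithinAt
    · intro x hx
      exact hn x (interior_subset hx)
  exact this (left_mem_Icc.2 hab) (right_mem_Icc.2 hab) hab

lemma abs_sub_le_of_deriv {f f' g g' : ℝ → ℝ} {a b : ℝ} (hab : a ≤ b)
    (hf : ∀ x ∈ Icc a b, HasDerivAt f (f' x) x) (hg : ∀ x ∈ Icc a b, HasDerivAt g (g' x) x)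
    (hn : ∀ x ∈ Icc a b, |f' x| ≤ g' x) : |f b - f a| ≤ g b - g a := by
  have h1 := le_of_deriv_nonpos hab (fun x hx => (hf x hx).sub (hg x hx))
    (fun x hx => by have := (abs_le.1 (hn x hx)).2; linarith)
  have h2 := le_of_deriv_nonpos hab (fun x hx => ((hf x hx).neg).sub (hg x hx))
    (fun x hx => by have := (abs_le.1 (hn x hx)).1; linarith)
  simp only [Pi.sub_apply, Pi.neg_apply] at h1 h2
  rw [abs_le]; constructor <;> linarith

/-- basic facts on `Q` -/
lemma Q_facts {N x : ℝ} (hN : 1 ≤ N) (hx : -(2 * N ^ 2) ≤ x) (hx1 : x ≤ -1) :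
    -x / 2 ≤ -(x + x ^ 2 / (4 * N ^ 2) - 1 / (2 * N)) ∧
    -(x + x ^ 2 / (4 * N ^ 2) - 1 / (2 * N)) ≤ 2 * (-x) ∧
    |-(1 + x / (2 * N ^ 2))| ≤ 1 ∧ 1 / (2 * N ^ 2) ≤ 1 / (-x) := by
  have hN0 : 0 < N := by linarith
  have hN2 : 0 < N ^ 2 := by positivity
  have e1 : x ^ 2 / (4 * N ^ 2) ≤ -x / 2 := by
    rw [div_le_div_iff₀ (by positivity) (by norm_num)]
    nlinarith
  have e2 : 0 ≤ x ^ 2 / (4 * N ^ 2) := by positivity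
  have e3 : 0 < 1 / (2 * N) := by positivity
  have e4 : 1 / (2 * N) ≤ 1 := by
    rw [div_le_one (by positivity)]; linarith
  have e5 : -1 ≤ x / (2 * N ^ 2) := by
    rw [le_div_iff₀ (by positivity)]; linarith
  have e6 : x / (2 * N ^ 2) ≤ 0 := div_nonpos_of_nonpos_of_nonneg (by linarith) (by positivity)
  refine ⟨by linarith, by linarith, ?_, ?_⟩
  · rw [abs_le]; constructor <;> linarith
  · apply one_div_le_one_div_of_le <;> linarith

lemma WK.hQ {N : ℝ} (hN : 1 ≤ N) (x : ℝ) :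
    HasDerivAt (fun x : ℝ => -(x + x ^ 2 / (4 * N ^ 2) - 1 / (2 * N))) (-(1 + x / (2 * N ^ 2))) x := by
  have hN0 : N ≠ 0 := by linarith
  have := (((hasDerivAt_id x).add (((hasDerivAt_id x).pow 2).div_const (4 * N ^ 2))).sub_const (1 / (2 * N))).neg
  refine this.congr_deriv ?_
  simp only [id, Nat.cast_ofNat]; field_simp; ring

lemma WK.hQ' {N : ℝ} (x : ℝ) :
    HasDerivAt (fun x : ℝ => -(1 + x / (2 * N ^ 2))) (-(1 / (2 * N ^ 2))) x := by
  exact (((hasDerivAt_id x).div_const (2 * N ^ 2)).const_add 1).neg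

/-- WKB energy bound. -/
lemma WK.energy {N : ℝ} {ψ dψ Φ : ℝ → ℝ} (h : WK N ψ dψ Φ) {x : ℝ} (hx : -(2 * N ^ 2) ≤ x)
    (hx1 : x ≤ -1) :
    √(-(x + x ^ 2 / (4 * N ^ 2) - 1 / (2 * N))) * ψ x ^ 2 +
      (dψ x + (-(1 + x / (2 * N ^ 2))) * ψ x / (4 * (-(x + x ^ 2 / (4 * N ^ 2) - 1 / (2 * N))))) ^ 2 /
        √(-(x + x ^ 2 / (4 * N ^ 2) - 1 / (2 * N))) ≤ 2 * Real.exp 3 := by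
  have hN := h.hN
  have hN0 : 0 < N := by linarith
  set Q : ℝ → ℝ := fun x => -(x + x ^ 2 / (4 * N ^ 2) - 1 / (2 * N)) with hQdef
  set P : ℝ → ℝ := fun x => -(1 + x / (2 * N ^ 2)) with hPdef
  set c : ℝ := -(2 * N ^ 2) with hc
  set R : ℝ := -(1 / (2 * N ^ 2)) with hR
  have hQd : ∀ x, HasDerivAt Q (P x) x := fun x => WK.hQ hN x
  have hPd : ∀ x, HasDerivAt P R x := fun x => WK.hQ' x
  have hQpos : ∀ y, c ≤ y → y ≤ -1 → 0 < Q y := fun y hy hy1 => by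
    have := (Q_facts hN hy hy1).1
    have : -y / 2 ≤ Q y := this
    linarith
  let G : ℝ → ℝ := fun y => dψ y + P y * ψ y / (4 * Q y)
  let F : ℝ → ℝ := fun y => √(Q y) * ψ y ^ 2 + G y ^ 2 / √(Q y)
  let F' : ℝ → ℝ := fun y => 2 / √(Q y) * ψ y * G y * (R / (4 * Q y) - 5 * P y ^ 2 / (16 * Q y ^ 2))
  have hF : ∀ y, c ≤ y → y ≤ -1 → HasDerivAt F (F' y) y := by
    intro y hy hy1
    have hq := hQpos y hy hy1
    have hS := (hQd y).sqrt hq.ne'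
    have hs : 0 < √(Q y) := Real.sqrt_pos.2 hq
    have hG : HasDerivAt G _ y := (h.h2 y).add (((hPd y).mul (h.h1 y)).div ((hQd y).const_mul 4) (by positivity))
    have := (hS.mul ((h.h1 y).pow 2)).add ((hG.pow 2).div hS hs.ne')
    refine this.congr_deriv ?_
    symm
    have e : (y + y ^ 2 / (4 * N ^ 2) - 1 / (2 * N)) = - Q y := by simp [hQdef]
    rw [e]
    simp only [F', G, Pi.mul_apply, Pi.pow_apply, Nat.cast_ofNat, pow_one,
      show (2 - 1 : ℕ) = 1 from rfl]
    set s := √(Q y) with hsdef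
    have hq2 : Q y = s ^ 2 := (Real.sq_sqrt hq.le).symm
    rw [hq2]
    have hs0 : s ≠ 0 := hs.ne'
    generalize s = t at *
    generalize P y = p
    field_simp
    ring
  have hF0 : ∀ y, c ≤ y → y ≤ -1 → 0 ≤ F y := fun y _ _ => by positivity
  have hFb : ∀ y, c ≤ y → y ≤ -1 → |F' y| ≤ 3 / y ^ 2 * F y := by
    intro y hy hy1
    obtain ⟨f1, f2, f3, f4⟩ := Q_facts hN hy hy1
    change -y / 2 ≤ Q y at f1
    change |P y| ≤ 1 at f3
    have hq := hQpos y hy hy1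
    have hs : 0 < √(Q y) := Real.sqrt_pos.2 hq
    have hy0 : 0 < -y := by linarith
    have k1 : |2 / √(Q y) * ψ y * G y| ≤ F y / √(Q y) := by
      rw [show 2 / √(Q y) * ψ y * G y = (2 * ψ y * G y) / √(Q y) by ring, abs_div, abs_of_pos hs]
      gcongr
      have : F y = (√(√(Q y)) * ψ y) ^ 2 + (G y / √(√(Q y))) ^ 2 := by
        simp only [F, mul_pow, div_pow, Real.sq_sqrt hs.le]
      have e : 2 * ψ y * G y = 2 * (√(√(Q y)) * ψ y) * (G y / √(√(Q y))) := by
        have : 0 < √(√(Q y)) := Real.sqrt_pos.2 hs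
        field_simp
      rw [this, e, abs_le]
      constructor
      · nlinarith [sq_nonneg ((√(√(Q y)) * ψ y) + (G y / √(√(Q y))))]
      · nlinarith [sq_nonneg ((√(√(Q y)) * ψ y) - (G y / √(√(Q y))))]
    have k2 : |R / (4 * Q y) - 5 * P y ^ 2 / (16 * Q y ^ 2)| ≤ (7 / 4) / y ^ 2 := by
      have a1 : |R / (4 * Q y)| ≤ (1 / 2) / y ^ 2 := by
        rw [abs_div, hR, abs_neg, abs_of_pos (by positivity), abs_of_pos (by positivity)]
        calc 1 / (2 * N ^ 2) / (4 * Q y) ≤ (1 / (-y)) / (4 * (-y / 2)) := by gcongr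
          _ = _ := by field_simp; ring
      have a2 : |5 * P y ^ 2 / (16 * Q y ^ 2)| ≤ (5 / 4) / y ^ 2 := by
        rw [abs_of_nonneg (by positivity)]
        have : P y ^ 2 ≤ 1 := by rw [← sq_abs]; nlinarith [abs_nonneg (P y)]
        calc 5 * P y ^ 2 / (16 * Q y ^ 2) ≤ 5 * 1 / (16 * (-y / 2) ^ 2) := by gcongr
          _ = _ := by field_simp; ring
      calc _ ≤ _ := abs_sub _ _
        _ ≤ (1 / 2) / y ^ 2 + (5 / 4) / y ^ 2 := add_le_add a1 a2
        _ = _ := by ring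
    have k3 : 1 / √(Q y) ≤ 12 / 7 := by
      rw [div_le_iff₀ hs]
      have : (7 / 12 : ℝ) ≤ √(Q y) := by
        apply Real.le_sqrt_of_sq_le; norm_num; linarith
      linarith
    calc |F' y| = |2 / √(Q y) * ψ y * G y| * |R / (4 * Q y) - 5 * P y ^ 2 / (16 * Q y ^ 2)| := abs_mul _ _
      _ ≤ (F y / √(Q y)) * ((7 / 4) / y ^ 2) := by gcongr
      _ = (1 / √(Q y)) * (F y * ((7 / 4) / y ^ 2)) := by ring
      _ ≤ 12 / 7 * (F y * ((7 / 4) / y ^ 2)) := by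
          have := hF0 y hy hy1
          gcongr
      _ = _ := by ring
  have key := le_of_deriv_nonpos (f := fun y => F y * Real.exp (3 / y)) (a := c) (b := x) hx
    (f' := fun y => F' y * Real.exp (3 / y) + F y * (Real.exp (3 / y) * (-3 / y ^ 2)))
    (fun y hy => by
      have hy0 : y ≠ 0 := by have := hy.2; intro h0; linarith
      have d : HasDerivAt (fun y : ℝ => 3 / y) (-3 / y ^ 2) y := by
        have := ((hasDerivAt_inv hy0).const_mul 3)
        refine this.congr_deriv ?_
        ring
      exact (hF y hy.1 (by linarith [hy.2])).mul d.exp)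
    (fun y hy => by
      have hb := (abs_le.1 (hFb y hy.1 (by linarith [hy.2]))).2
      have : F' y * Real.exp (3 / y) + F y * (Real.exp (3 / y) * (-3 / y ^ 2))
        = Real.exp (3 / y) * (F' y - 3 / y ^ 2 * F y) := by ring
      rw [this]
      exact mul_nonpos_of_nonneg_of_nonpos (Real.exp_pos _).le (by linarith))
  have hFc : F c ≤ 2 := by
    have hPc : P c = 0 := by simp only [hPdef, hc]; field_simp; ring
    have hQc : Q c ≤ (2 * N) ^ 2 := by
      simp only [hQdef, hc]
      have : 1 / (2 * N) ≤ 1 := by rw [div_le_one (by positivity)]; linarith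
      have e : (-(2 * N ^ 2)) ^ 2 / (4 * N ^ 2) = N ^ 2 := by field_simp; ring
      rw [e]; nlinarith
    have hs : √(Q c) ≤ 2 * N := Real.sqrt_le_iff.2 ⟨by positivity, hQc⟩
    have e : F c = √(Q c) * ψ c ^ 2 := by
      have := h.c1
      rw [← hc] at this
      simp only [F, G, this, hPc]; simp
    rw [e]
    calc √(Q c) * ψ c ^ 2 ≤ (2 * N) * (1 / N) := by
          have := h.c3
          gcongr
      _ = 2 := by field_simp
  have hx0 : F x * Real.exp (3 / x) ≤ 2 * 1 := by
    refine key.trans ?_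
    have : Real.exp (3 / c) ≤ 1 := by
      rw [Real.exp_le_one_iff]
      exact div_nonpos_of_nonneg_of_nonpos (by norm_num) (by linarith)
    have := hF0 c le_rfl (by linarith)
    gcongr
  have hx2 : 1 ≤ Real.exp (3 / x) * Real.exp 3 := by
    rw [← Real.exp_add, Real.one_le_exp_iff]
    have : -3 ≤ 3 / x := by
      rw [le_div_iff_of_neg (by linarith)]; linarith
    linarith
  change F x ≤ _
  calc F x ≤ F x * (Real.exp (3 / x) * Real.exp 3) := le_mul_of_one_le_right (hF0 x hx hx1) hx2
    _ = (F x * Real.exp (3 / x)) * Real.exp 3 := by ring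
    _ ≤ 2 * 1 * Real.exp 3 := by gcongr
    _ = _ := by ring

lemma two_exp_three_le : 2 * Real.exp 3 ≤ 42 := by
  have h := Real.exp_one_lt_d9
  have e : Real.exp 3 = Real.exp 1 ^ 3 := by rw [← Real.exp_nat_mul]; norm_num
  have : Real.exp 1 ^ 3 ≤ 2.7182818286 ^ 3 := by gcongr
  rw [e]; norm_num at this ⊢; linarith

lemma WK.left {N : ℝ} {ψ dψ Φ : ℝ → ℝ} (h : WK N ψ dψ Φ) {x : ℝ} (hx : -(2 * N ^ 2) ≤ x)
    (hx1 : x ≤ -1) : ψ x ^ 2 * √(-x) ≤ 400 ∧ dψ x ^ 2 ≤ 400 * √(-x) := by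
  have hF := (h.energy hx hx1).trans two_exp_three_le
  obtain ⟨f1, f2, f3, f4⟩ := Q_facts h.hN hx hx1
  set Q := -(x + x ^ 2 / (4 * N ^ 2) - 1 / (2 * N))
  set P := -(1 + x / (2 * N ^ 2))
  have hq : 0 < Q := by linarith
  have hs : 0 < √Q := Real.sqrt_pos.2 hq
  set s := √Q with hsd
  set k := √(-x) with hk
  have hss : s ^ 2 = Q := Real.sq_sqrt hq.le
  have hkk : k ^ 2 = -x := Real.sq_sqrt (by linarith)
  have hk1 : 1 ≤ k := by rw [hk, Real.one_le_sqrt]; linarith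
  have a1 : k ≤ 2 * s := by nlinarith
  have a2 : s ≤ 2 * k := by nlinarith
  set G := dψ x + P * ψ x / (4 * Q)
  have b1 : s * ψ x ^ 2 ≤ 42 := by
    have : 0 ≤ G ^ 2 / s := by positivity
    linarith
  have b2 : G ^ 2 ≤ 42 * s := by
    have : 0 ≤ s * ψ x ^ 2 := by positivity
    rw [← div_le_iff₀ hs]; linarith
  have c1 : ψ x ^ 2 * k ≤ 84 := by nlinarith [sq_nonneg (ψ x)]
  have c2 : ψ x ^ 2 ≤ 84 := by nlinarith [sq_nonneg (ψ x)]
  refine ⟨by linarith, ?_⟩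
  have e : dψ x = G - P * ψ x / (4 * Q) := by simp [G]
  have c3 : (P * ψ x / (4 * Q)) ^ 2 ≤ 84 := by
    have : |P * ψ x / (4 * Q)| ≤ |ψ x| := by
      rw [abs_div, abs_mul, abs_of_pos (show 0 < 4 * Q by positivity), div_le_iff₀ (by positivity)]
      have := abs_nonneg (ψ x)
      nlinarith [abs_nonneg P]
    have := sq_le_sq.2 this
    linarith
  have c4 : dψ x ^ 2 ≤ 2 * G ^ 2 + 2 * (P * ψ x / (4 * Q)) ^ 2 := by
    rw [e]; nlinarith [sq_nonneg (G + P * ψ x / (4 * Q))]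
  nlinarith

lemma WK.mid {N : ℝ} {ψ dψ Φ : ℝ → ℝ} (h : WK N ψ dψ Φ) {x : ℝ} (hx : -1 ≤ x)
    (hx1 : x ≤ 2) : ψ x ^ 2 + dψ x ^ 2 ≤ 800 * Real.exp 15 := by
  have hN := h.hN
  have h0 := h.left (x := -1) (by nlinarith) le_rfl
  simp at h0
  have key := le_of_deriv_nonpos (f := fun y => (ψ y ^ 2 + dψ y ^ 2) * Real.exp (-5 * y)) (a := -1) (b := x) hx
    (f' := fun y => Real.exp (-5 * y) * (2 * ψ y * dψ y * (1 + (y + y ^ 2 / (4 * N ^ 2) - 1 / (2 * N))) - 5 * (ψ y ^ 2 + dψ y ^ 2)))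
    (fun y hy => by
      have d : HasDerivAt (fun y : ℝ => -5 * y) (-5) y := by
        simpa using (hasDerivAt_id y).const_mul (-5)
      have := (((h.h1 y).pow 2).add ((h.h2 y).pow 2)).mul d.exp
      refine this.congr_deriv ?_
      simp only [Pi.add_apply, Pi.pow_apply, Nat.cast_ofNat, show (2 - 1 : ℕ) = 1 from rfl]
      ring)
    (fun y hy => by
      apply mul_nonpos_of_nonneg_of_nonpos (Real.exp_pos _).le
      have y1 := hy.1
      have y2 : y ≤ 2 := hy.2.trans hx1
      have e2 : 0 ≤ y ^ 2 / (4 * N ^ 2) := by positivity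
      have e3 : 0 < 1 / (2 * N) := by positivity
      have e4 : 1 / (2 * N) ≤ 1 := by
        rw [div_le_one (by positivity)]; linarith
      have e5 : y ^ 2 / (4 * N ^ 2) ≤ 1 := by
        rw [div_le_one (by positivity)]; nlinarith
      set t := 1 + (y + y ^ 2 / (4 * N ^ 2) - 1 / (2 * N))
      have t1 : |t| ≤ 5 := by rw [abs_le]; constructor <;> simp only [t] <;> linarith
      have t2 : 2 * ψ y * dψ y * t ≤ |2 * ψ y * dψ y| * |t| := by rw [← abs_mul]; exact le_abs_self _
      have t3 : |2 * ψ y * dψ y| ≤ ψ y ^ 2 + dψ y ^ 2 := by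
        rw [abs_le]; constructor <;> nlinarith [sq_nonneg (ψ y + dψ y), sq_nonneg (ψ y - dψ y)]
      nlinarith [abs_nonneg (2 * ψ y * dψ y), abs_nonneg t])
  have e : Real.exp 15 = Real.exp (-5 * -1) * Real.exp 10 := by rw [← Real.exp_add]; norm_num
  have e2 : 1 ≤ Real.exp (-5 * x) * Real.exp 10 := by
    rw [← Real.exp_add, Real.one_le_exp_iff]; linarith
  calc ψ x ^ 2 + dψ x ^ 2 ≤ (ψ x ^ 2 + dψ x ^ 2) * (Real.exp (-5 * x) * Real.exp 10) :=
        le_mul_of_one_le_right (by positivity) e2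
    _ = (ψ x ^ 2 + dψ x ^ 2) * Real.exp (-5 * x) * Real.exp 10 := by ring
    _ ≤ (ψ (-1) ^ 2 + dψ (-1) ^ 2) * Real.exp (-5 * -1) * Real.exp 10 := by gcongr
    _ ≤ 800 * Real.exp (-5 * -1) * Real.exp 10 := by gcongr; linarith
    _ = _ := by rw [e]; ring

lemma nonpos_of_mono_tendsto {f : ℝ → ℝ} {a : ℝ} (ht : Tendsto f atTop (nhds 0))
    (hf : ∀ x y, a ≤ x → x ≤ y → f x ≤ f y) {x : ℝ} (hx : a ≤ x) : f x ≤ 0 := by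
  apply ge_of_tendsto ht
  filter_upwards [eventually_ge_atTop x] with y hy
  exact hf x y hx hy

lemma q_facts {N y : ℝ} (hN : 1 ≤ N) (y1 : 1 ≤ y) :
    1 / 2 ≤ (y + y ^ 2 / (4 * N ^ 2) - 1 / (2 * N)) := by
  have e2 : 0 ≤ y ^ 2 / (4 * N ^ 2) := by positivity
  have e4 : 1 / (2 * N) ≤ 1 / 2 := by
    apply one_div_le_one_div_of_le <;> linarith
  linarith

lemma WK.right1 {N : ℝ} {ψ dψ Φ : ℝ → ℝ} (h : WK N ψ dψ Φ) {x : ℝ} (hx : 1 ≤ x) :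
    ψ x * dψ x ≤ 0 := by
  refine nonpos_of_mono_tendsto (f := fun x => ψ x * dψ x) h.t1 (a := 1) (fun x y hx hxy => ?_) hx
  have := le_of_deriv_nonpos (f := fun x => -(ψ x * dψ x)) hxy
    (fun y _ => ((h.h1 y).mul (h.h2 y)).neg) (fun y hy => by
      have := q_facts h.hN (hx.trans hy.1)
      set q := (y + y ^ 2 / (4 * N ^ 2) - 1 / (2 * N))
      nlinarith [mul_nonneg (show 0 ≤ q by linarith) (sq_nonneg (ψ y)), sq_nonneg (dψ y)])
  linarith

lemma WK.right2 {N : ℝ} {ψ dψ Φ : ℝ → ℝ} (h : WK N ψ dψ Φ) {x : ℝ} (hx : 1 ≤ x) :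
    (x + x ^ 2 / (4 * N ^ 2) - 1 / (2 * N)) * ψ x ^ 2 ≤ dψ x ^ 2 := by
  have ht := h.t2.neg
  simp only [neg_zero] at ht
  have := nonpos_of_mono_tendsto ht (a := 1) (fun x y hx hxy => by
    refine le_of_deriv_nonpos (f := fun x => dψ x ^ 2 - (x + x ^ 2 / (4 * N ^ 2) - 1 / (2 * N)) * ψ x ^ 2)
      (f' := fun y => -(1 + y / (2 * N ^ 2)) * ψ y ^ 2) hxy ?_ ?_ |> neg_le_neg
    · intro y hy
      have d := (WK.hQ h.hN y).neg
      have d2 := ((h.h2 y).pow 2).sub (d.mul ((h.h1 y).pow 2))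
      have e : (fun x => dψ x ^ 2 - (x + x ^ 2 / (4 * N ^ 2) - 1 / (2 * N)) * ψ x ^ 2) =
        dψ ^ 2 - (-fun x => -(x + x ^ 2 / (4 * N ^ 2) - 1 / (2 * N))) * ψ ^ 2 := by
        funext x; simp only [Pi.sub_apply, Pi.mul_apply, Pi.neg_apply, Pi.pow_apply]; ring
      rw [e]
      refine d2.congr_deriv ?_
      simp only [Pi.neg_apply, Pi.pow_apply, Nat.cast_ofNat, show (2 - 1 : ℕ) = 1 from rfl]
      ring
    · intro y hy
      have : 0 ≤ y / (2 * N ^ 2) := div_nonneg (by linarith [hy.1]) (by positivity)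
      have := sq_nonneg (ψ y)
      nlinarith) hx
  linarith

lemma WK.right3 {N : ℝ} {ψ dψ Φ : ℝ → ℝ} (h : WK N ψ dψ Φ) {x : ℝ} (hx : 1 ≤ x) :
    ψ x ^ 2 * Real.exp x ≤ ψ 1 ^ 2 * Real.exp 1 := by
  refine le_of_deriv_nonpos (f := fun x => ψ x ^ 2 * Real.exp x)
    (f' := fun y => (2 * (ψ y * dψ y) + ψ y ^ 2) * Real.exp y) hx ?_ ?_
  · intro y hy
    have := ((h.h1 y).pow 2).mul (Real.hasDerivAt_exp y)
    refine this.congr_deriv ?_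
    simp only [Pi.pow_apply, Nat.cast_ofNat, show (2 - 1 : ℕ) = 1 from rfl]
    ring
  · intro y hy
    apply mul_nonpos_of_nonpos_of_nonneg _ (Real.exp_pos _).le
    have a := h.right1 hy.1
    have b := h.right2 hy.1
    have c := q_facts h.hN hy.1
    have d : 1 / 2 * ψ y ^ 2 ≤ dψ y ^ 2 := le_trans (by gcongr) b
    by_contra! hcon
    have e1 : -(2 * (ψ y * dψ y)) < ψ y ^ 2 := by linarith
    have e2 : (2 * (ψ y * dψ y)) ^ 2 < (ψ y ^ 2) ^ 2 := by nlinarith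
    have : (2 * (ψ y * dψ y)) ^ 2 = 4 * ψ y ^ 2 * dψ y ^ 2 := by ring
    nlinarith [sq_nonneg (ψ y)]

lemma WK.right4 {N : ℝ} {ψ dψ Φ : ℝ → ℝ} (h : WK N ψ dψ Φ) {x y : ℝ} (hx : 1 ≤ x) (hxy : x ≤ y) :
    dψ y ^ 2 ≤ dψ x ^ 2 := by
  refine le_of_deriv_nonpos (f := fun x => dψ x ^ 2) (f' := fun y => 2 * (y + y ^ 2 / (4 * N ^ 2) - 1 / (2 * N)) * (ψ y * dψ y)) hxy ?_ ?_
  · intro y hy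
    refine ((h.h2 y).pow 2).congr_deriv ?_
    simp only [Nat.cast_ofNat, show (2 - 1 : ℕ) = 1 from rfl]
    ring
  · intro y hy
    have a := h.right1 (hx.trans hy.1)
    have c := q_facts h.hN (hx.trans hy.1)
    exact mul_nonpos_of_nonneg_of_nonpos (by linarith) a

lemma WK.right {N : ℝ} {ψ dψ Φ : ℝ → ℝ} (h : WK N ψ dψ Φ) {x : ℝ} (hx : -1 ≤ x) :
    ψ x ^ 2 ≤ (3200 * Real.exp 17) * Real.exp (-x) ∧ dψ x ^ 2 ≤ (3200 * Real.exp 17) * Real.exp (-x) := by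
  have e17 : Real.exp 17 = Real.exp 15 * Real.exp 2 := by rw [← Real.exp_add]; norm_num
  have hp := Real.exp_pos 15
  set B := 800 * Real.exp 15 with hB
  have hBp : 0 < B := by positivity
  have e : 3200 * Real.exp 17 * Real.exp (-x) = 4 * B * Real.exp (2 - x) := by
    rw [e17, sub_eq_add_neg, Real.exp_add]; ring
  rw [e]
  have hψ : ∀ y, 1 ≤ y → ψ y ^ 2 ≤ B * Real.exp (1 - y) := by
    intro y hy
    have a := h.right3 hy
    have b := h.mid (x := 1) (by norm_num) (by norm_num)
    rw [sub_eq_add_neg, Real.exp_add, ← mul_assoc, Real.exp_neg, ← div_eq_mul_inv, le_div_iff₀ (Real.exp_pos _)]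
    refine a.trans ?_
    gcongr
    nlinarith [sq_nonneg (dψ 1)]
  by_cases hx2 : x ≤ 2
  · have a := h.mid hx hx2
    have : 1 ≤ Real.exp (2 - x) := by rw [Real.one_le_exp_iff]; linarith
    constructor <;> nlinarith [sq_nonneg (ψ x), sq_nonneg (dψ x)]
  · push Not at hx2
    have p1 := hψ x (by linarith)
    have p2 := hψ (x - 1) (by linarith)
    rw [show 1 - (x - 1) = 2 - x by ring] at p2
    have p3 : Real.exp (1 - x) ≤ Real.exp (2 - x) := by gcongr; norm_num
    refine ⟨by nlinarith, ?_⟩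
    obtain ⟨ξ, hξ, hξ'⟩ := exists_hasDerivAt_eq_slope ψ dψ (show x - 1 < x by linarith)
      (fun y _ => (h.h1 y).continuousAt.continuousWithinAt) (fun y _ => h.h1 y)
    have p4 := h.right4 (x := ξ) (y := x) (by linarith [hξ.1]) hξ.2.le
    have : dψ ξ = ψ x - ψ (x - 1) := by rw [hξ']; simp
    have : dψ ξ ^ 2 ≤ 2 * ψ x ^ 2 + 2 * ψ (x - 1) ^ 2 := by
      rw [this]; nlinarith [sq_nonneg (ψ x + ψ (x - 1))]
    nlinarith

lemma WK.leftPhi {N : ℝ} {ψ dψ Φ : ℝ → ℝ} (h : WK N ψ dψ Φ) {x : ℝ} (hx : -(2 * N ^ 2) ≤ x)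
    (hx1 : x ≤ -1) : |Φ x| ≤ 2 * |dψ x| / (-x) + 280 / x ^ 2 := by
  have hN := h.hN
  have hN0 : 0 < N := by linarith
  have hψ20 : ∀ y, -(2 * N ^ 2) ≤ y → y ≤ -1 → |ψ y| ≤ 20 := by
    intro y hy hy1
    have a := (h.left hy hy1).1
    have : 1 ≤ √(-y) := by rw [Real.one_le_sqrt]; linarith
    apply abs_le_of_sq_le_sq _ (by norm_num)
    nlinarith [sq_nonneg (ψ y)]
  set Q : ℝ → ℝ := fun x => -(x + x ^ 2 / (4 * N ^ 2) - 1 / (2 * N)) with hQdef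
  set P : ℝ → ℝ := fun x => -(1 + x / (2 * N ^ 2)) with hPdef
  set c : ℝ := -(2 * N ^ 2) with hc
  set R : ℝ := -(1 / (2 * N ^ 2)) with hR
  have hQd : ∀ x, HasDerivAt Q (P x) x := fun x => WK.hQ hN x
  have hPd : ∀ x, HasDerivAt P R x := fun x => WK.hQ' x
  have hQpos : ∀ y, c ≤ y → y ≤ -1 → 0 < Q y := fun y hy hy1 => by
    have := (Q_facts hN hy hy1).1
    have : -y / 2 ≤ Q y := this
    linarith
  have key := abs_sub_le_of_deriv (f := fun y => Φ y + dψ y / Q y + ψ y * P y / Q y ^ 2)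
    (f' := fun y => ψ y * (R / Q y ^ 2 - 2 * P y ^ 2 / Q y ^ 3))
    (g := fun y => 200 / y ^ 2) (g' := fun y => 400 / (-y) ^ 3) hx
    (fun y hy => by
      have hy1 : y ≤ -1 := hy.2.trans hx1
      have hq := hQpos y hy.1 hy1
      have := ((h.h3 y).add ((h.h2 y).div (hQd y) hq.ne')).add
        (((h.h1 y).mul (hPd y)).div ((hQd y).pow 2) (by simp only [Pi.pow_apply]; positivity))
      refine this.congr_deriv ?_
      have e : (y + y ^ 2 / (4 * N ^ 2) - 1 / (2 * N)) = - Q y := by simp [hQdef]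
      rw [e]
      simp only [Pi.mul_apply, Pi.pow_apply, Nat.cast_ofNat, pow_one,
        show (2 - 1 : ℕ) = 1 from rfl]
      field_simp
      ring)
    (fun y hy => by
      have hy0 : y ≠ 0 := by have := hy.2; intro h0; linarith
      have := (((hasDerivAt_id y).pow 2).inv (by simpa using hy0)).const_mul 200
      refine this.congr_deriv ?_
      simp only [id, Pi.pow_apply, Nat.cast_ofNat, pow_one, show (2 - 1 : ℕ) = 1 from rfl]
      field_simp
      ring)
    (fun y hy => by
      have hy1 : y ≤ -1 := hy.2.trans hx1
      have hq := hQpos y hy.1 hy1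
      obtain ⟨f1, f2, f3, f4⟩ := Q_facts hN hy.1 hy1
      change -y / 2 ≤ Q y at f1
      change |P y| ≤ 1 at f3
      have hy0 : 0 < -y := by linarith
      have a1 : |R / Q y ^ 2| ≤ 4 / (-y) ^ 3 := by
        rw [abs_div, hR, abs_neg, abs_of_pos (by positivity), abs_of_pos (by positivity)]
        calc 1 / (2 * N ^ 2) / Q y ^ 2 ≤ (1 / (-y)) / (-y / 2) ^ 2 := by gcongr
          _ = _ := by field_simp; try ring
      have a2 : |2 * P y ^ 2 / Q y ^ 3| ≤ 16 / (-y) ^ 3 := by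
        rw [abs_of_nonneg (by positivity)]
        have : P y ^ 2 ≤ 1 := by rw [← sq_abs]; nlinarith [abs_nonneg (P y)]
        calc 2 * P y ^ 2 / Q y ^ 3 ≤ 2 * 1 / (-y / 2) ^ 3 := by gcongr
          _ = _ := by field_simp; try ring
      rw [abs_mul]
      calc _ ≤ 20 * (4 / (-y) ^ 3 + 16 / (-y) ^ 3) := by
            gcongr
            · exact hψ20 y hy.1 hy1
            · exact (abs_sub _ _).trans (add_le_add a1 a2)
        _ = _ := by ring)
  have hPc : P c = 0 := by simp only [hPdef, hc]; field_simp; ring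
  have hz : Φ c + dψ c / Q c + ψ c * P c / Q c ^ 2 = 0 := by
    rw [hPc, show dψ c = 0 from h.c1, show Φ c = 0 from h.c2]; simp
  have hcc : 0 ≤ 200 / c ^ 2 := by positivity
  simp only [hz, sub_zero] at key
  obtain ⟨f1, f2, f3, f4⟩ := Q_facts hN hx hx1
  change -x / 2 ≤ Q x at f1
  change |P x| ≤ 1 at f3
  have hx0 : 0 < -x := by linarith
  have hq := hQpos x hx hx1
  have b1 : |dψ x / Q x| ≤ 2 * |dψ x| / (-x) := by
    rw [abs_div, abs_of_pos hq]
    calc |dψ x| / Q x ≤ |dψ x| / (-x / 2) := by gcongr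
      _ = _ := by field_simp
  have b2 : |ψ x * P x / Q x ^ 2| ≤ 80 / x ^ 2 := by
    rw [abs_div, abs_mul, abs_of_pos (show 0 < Q x ^ 2 by positivity)]
    calc |ψ x| * |P x| / Q x ^ 2 ≤ 20 * 1 / (-x / 2) ^ 2 := by
          gcongr; exact hψ20 x hx hx1
      _ = _ := by field_simp; try ring
  have e : Φ x = (Φ x + dψ x / Q x + ψ x * P x / Q x ^ 2) - dψ x / Q x - ψ x * P x / Q x ^ 2 := by ring
  rw [e]
  calc _ ≤ |(Φ x + dψ x / Q x + ψ x * P x / Q x ^ 2)| + |dψ x / Q x| + |ψ x * P x / Q x ^ 2| :=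
        (abs_sub _ _).trans (by gcongr; exact abs_sub _ _)
    _ ≤ 200 / x ^ 2 + 2 * |dψ x| / (-x) + 80 / x ^ 2 := by gcongr; linarith
    _ = _ := by ring

noncomputable def rr (x : ℝ) : ℝ := √(√(1 + |x|))

lemma rr_pow (x : ℝ) : rr x ^ 4 = 1 + |x| := by
  have : (0:ℝ) ≤ 1 + |x| := by positivity
  rw [show rr x ^ 4 = (rr x ^ 2) ^ 2 by ring, rr, Real.sq_sqrt (Real.sqrt_nonneg _), Real.sq_sqrt this]

lemma rr_one_le (x : ℝ) : 1 ≤ rr x := by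
  rw [rr, Real.one_le_sqrt, Real.one_le_sqrt]
  linarith [abs_nonneg x]

lemma rr_le (x : ℝ) : rr x ≤ 1 + |x| := by
  rw [← rr_pow]
  have := rr_one_le x
  exact le_self_pow₀ this (by norm_num)

lemma WK.leftPack {N : ℝ} {ψ dψ Φ : ℝ → ℝ} (h : WK N ψ dψ Φ) {x : ℝ} (hx : -(2 * N ^ 2) ≤ x)
    (hx1 : x ≤ -1) : |ψ x| ≤ 40 / rr x ∧ |dψ x| ≤ 20 * rr x ∧
      |(x + x ^ 2 / (4 * N ^ 2) - 1 / (2 * N)) * ψ x| ≤ 40 * rr x ^ 3 ∧ |Φ x| ≤ 2560 / rr x ^ 3 := by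
  obtain ⟨a, b⟩ := h.left hx hx1
  have hΦ := h.leftPhi hx hx1
  obtain ⟨f1, f2, f3, f4⟩ := Q_facts h.hN hx hx1
  set m := √(√(-x)) with hm
  have hm1 : 1 ≤ m := by
    rw [hm, Real.one_le_sqrt, Real.one_le_sqrt]; linarith
  have hm0 : 0 < m := by linarith
  have hm2 : m ^ 2 = √(-x) := by rw [hm, Real.sq_sqrt (Real.sqrt_nonneg _)]
  have hm4 : m ^ 4 = -x := by
    rw [show m ^ 4 = (m ^ 2) ^ 2 by ring, hm2, Real.sq_sqrt (by linarith)]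
  have r1 := rr_one_le x
  have r4 := rr_pow x
  rw [abs_of_neg (by linarith)] at r4
  have hmr : m ≤ rr x := by
    apply le_of_pow_le_pow_left₀ (n := 4) (by norm_num) (by linarith)
    linarith
  have hrm : rr x ≤ 2 * m := by
    apply le_of_pow_le_pow_left₀ (n := 4) (by norm_num) (by linarith)
    rw [mul_pow, hm4, r4]; norm_num; linarith
  rw [← hm2] at a b
  have a' : |ψ x| * m ≤ 20 := by
    rw [← abs_of_pos hm0, ← abs_mul]
    apply abs_le_of_sq_le_sq _ (by norm_num)
    rw [mul_pow]; linarith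
  have b' : |dψ x| ≤ 20 * m := by
    apply abs_le_of_sq_le_sq _ (by positivity)
    rw [mul_pow]; linarith
  have hψ0 := abs_nonneg (ψ x)
  refine ⟨?_, by linarith, ?_, ?_⟩
  · rw [le_div_iff₀ (by linarith)]
    nlinarith
  · rw [← neg_neg (x + x ^ 2 / (4 * N ^ 2) - 1 / (2 * N)), neg_mul, abs_neg, abs_mul, abs_of_pos (by linarith)]
    calc _ ≤ 2 * (-x) * |ψ x| := by gcongr
      _ = 2 * m ^ 3 * (|ψ x| * m) := by rw [← hm4]; ring
      _ ≤ 2 * rr x ^ 3 * 20 := by gcongr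
      _ = _ := by ring
  · refine hΦ.trans ?_
    have e : x ^ 2 = m ^ 8 := by rw [show m ^ 8 = (m ^ 4) ^ 2 by ring, hm4]; ring
    rw [e, ← hm4]
    calc 2 * |dψ x| / m ^ 4 + 280 / m ^ 8 ≤ 2 * (20 * m) / m ^ 4 + 280 / m ^ 3 := by
          gcongr <;> norm_num
      _ = 2560 / (2 * m) ^ 3 := by field_simp; norm_num
      _ ≤ _ := by gcongr

lemma poly_exp {x : ℝ} (hx : -1 ≤ x) : (1 + |x|) ^ 3 * Real.exp (-x / 2) ≤ 96 := by
  have h2 : Real.exp (1 / 2) ≤ 2 := by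
    have : Real.exp (1 / 2) ^ 2 = Real.exp 1 := by rw [← Real.exp_nat_mul]; norm_num
    have h := Real.exp_one_lt_d9
    nlinarith [Real.exp_pos (1 / 2)]
  rcases le_total x 0 with h0 | h0
  · rw [abs_of_nonpos h0]
    have e1 : Real.exp (-x / 2) ≤ 2 := le_trans (by gcongr; linarith) h2
    have e2 : (1 + -x) ^ 3 ≤ 2 ^ 3 := by gcongr <;> linarith
    have : 0 ≤ (1 + -x) ^ 3 := by apply pow_nonneg; linarith
    nlinarith [Real.exp_pos (-x / 2)]
  · rw [abs_of_nonneg h0]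
    have := Real.pow_div_factorial_le_exp ((1 + x) / 2) (by linarith) 3
    simp [Nat.factorial] at this
    have e : Real.exp ((1 + x) / 2) * Real.exp (-x / 2) = Real.exp (1 / 2) := by
      rw [← Real.exp_add]; congr 1; ring
    have hp := Real.exp_pos (-x / 2)
    have : (1 + x) ^ 3 ≤ 48 * Real.exp ((1 + x) / 2) := by
      have e : ((1 + x) / 2) ^ 3 / 6 = (1 + x) ^ 3 / 48 := by ring
      rw [e] at this; linarith
    nlinarith

noncomputable def s0 : ℝ := √(3200 * Real.exp 17)

lemma WK.rightPack {N : ℝ} {ψ dψ Φ : ℝ → ℝ} (h : WK N ψ dψ Φ) {x : ℝ} (hx : -1 ≤ x) :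
    |ψ x| ≤ 96 * s0 / (1 + |x|) ^ 3 ∧ |dψ x| ≤ 96 * s0 / (1 + |x|) ^ 3 ∧ |Φ x| ≤ 2560 + 4 * s0 := by
  have hs : s0 ^ 2 = 3200 * Real.exp 17 := Real.sq_sqrt (by positivity)
  have hs0 : 0 ≤ s0 := Real.sqrt_nonneg _
  have hb : ∀ y, -1 ≤ y → |ψ y| ≤ s0 * Real.exp (-y / 2) ∧ |dψ y| ≤ s0 * Real.exp (-y / 2) := by
    intro y hy
    have := h.right hy
    rw [← hs] at this
    have e : (s0 * Real.exp (-y / 2)) ^ 2 = s0 ^ 2 * Real.exp (-y) := by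
      rw [mul_pow, ← Real.exp_nat_mul]; congr 2; push_cast; ring
    rw [← e] at this
    exact ⟨abs_le_of_sq_le_sq this.1 (by positivity), abs_le_of_sq_le_sq this.2 (by positivity)⟩
  have hp := poly_exp hx
  have hc : s0 * Real.exp (-x / 2) ≤ 96 * s0 / (1 + |x|) ^ 3 := by
    rw [le_div_iff₀ (by positivity)]
    nlinarith
  refine ⟨(hb x hx).1.trans hc, (hb x hx).2.trans hc, ?_⟩
  have h0 := (h.leftPack (x := -1) (by nlinarith [h.hN]) le_rfl).2.2.2
  have h0' : 2560 / rr (-1) ^ 3 ≤ 2560 := by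
    apply div_le_self (by norm_num)
    exact one_le_pow₀ (rr_one_le _)
  have key := abs_sub_le_of_deriv (f := Φ) (f' := ψ) (g := fun y => -2 * s0 * Real.exp (-y / 2))
    (g' := fun y => s0 * Real.exp (-y / 2)) hx (fun y _ => h.h3 y) (fun y _ => by
      have d : HasDerivAt (fun y : ℝ => -y / 2) (-1 / 2) y := (hasDerivAt_id y).neg.div_const 2
      refine (d.exp.const_mul (-2 * s0)).congr_deriv ?_
      ring) (fun y hy => (hb y hy.1).1)
  have h2 : Real.exp (- -1 / 2) ≤ 2 := by
    have : Real.exp (- -1 / 2) ^ 2 = Real.exp 1 := by rw [← Real.exp_nat_mul]; norm_num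
    have h := Real.exp_one_lt_d9
    nlinarith [Real.exp_pos (- -1 / 2)]
  have e : Φ x = (Φ x - Φ (-1)) + Φ (-1) := by ring
  rw [e]
  have h3 : 0 ≤ 2 * s0 * Real.exp (-x / 2) := by positivity
  have h4 : s0 * Real.exp (- -1 / 2) ≤ s0 * 2 := by gcongr
  have := abs_add_le (Φ x - Φ (-1)) (Φ (-1))
  linarith

theorem WK.bounds : ∃ C : ℝ, 1 ≤ C ∧ ∀ (N : ℝ) (ψ dψ Φ : ℝ → ℝ), WK N ψ dψ Φ → ∀ x, -(2 * N ^ 2) ≤ x →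
    |ψ x| ≤ C / rr x ∧ |dψ x| ≤ C * rr x ∧
    |(x + x ^ 2 / (4 * N ^ 2) - 1 / (2 * N)) * ψ x| ≤ C * rr x ^ 3 ∧ |Φ x| ≤ C ∧
    (x ≤ 0 → |Φ x| ≤ C / rr x ^ 3) ∧
    (0 ≤ x → |ψ x| ≤ C / (1 + |x|) ^ 3 ∧ |dψ x| ≤ C / (1 + |x|) ^ 3) := by
  have hs0 : 0 ≤ s0 := Real.sqrt_nonneg _
  refine ⟨20480 + 200 * s0, by linarith, fun N ψ dψ Φ h x hx => ?_⟩
  have r1 := rr_one_le x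
  have r2 := rr_le x
  have r3 : 1 ≤ rr x ^ 3 := one_le_pow₀ r1
  have r0 : 0 < rr x := by linarith
  rcases le_total x (-1) with hx1 | hx1
  · obtain ⟨a, b, c, d⟩ := h.leftPack hx hx1
    refine ⟨a.trans (by gcongr; linarith), b.trans (by gcongr; linarith), c.trans (by gcongr; linarith), ?_,
      fun _ => d.trans (by gcongr; linarith), fun h0 => by linarith⟩
    refine d.trans ((div_le_self (by norm_num) r3).trans (by linarith))
  · obtain ⟨a, b, c⟩ := h.rightPack hx1
    have hN := h.hN
    have q0 : 1 ≤ 1 + |x| := by linarith [abs_nonneg x]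
    have k1 : 96 * s0 / (1 + |x|) ^ 3 ≤ 96 * s0 / rr x := by
      gcongr
      exact r2.trans (le_self_pow₀ q0 (by norm_num))
    refine ⟨a.trans (k1.trans (by gcongr; linarith)), ?_, ?_, by linarith, ?_, fun _ => ⟨a.trans (by gcongr; linarith), b.trans (by gcongr; linarith)⟩⟩
    · refine b.trans ((div_le_self (by positivity) (one_le_pow₀ q0)).trans ?_)
      nlinarith
    · have : |(x + x ^ 2 / (4 * N ^ 2) - 1 / (2 * N))| ≤ (1 + |x|) ^ 2 := by
        have e2 : 0 ≤ x ^ 2 / (4 * N ^ 2) := by positivity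
        have e5 : x ^ 2 / (4 * N ^ 2) ≤ x ^ 2 := by
          apply div_le_self (by positivity); nlinarith
        have e3 : 0 < 1 / (2 * N) := by positivity
        have e4 : 1 / (2 * N) ≤ 1 := by
          rw [div_le_one (by positivity)]; linarith
        have := sq_abs x
        have := abs_le.1 (le_refl |x|)
        rw [abs_le]; constructor <;> nlinarith
      rw [abs_mul]
      calc _ ≤ (1 + |x|) ^ 2 * (96 * s0 / (1 + |x|) ^ 3) := by gcongr
        _ = 96 * s0 / (1 + |x|) := by field_simp
        _ ≤ 96 * s0 := div_le_self (by positivity) q0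
        _ ≤ _ := by nlinarith
    · intro hx0
      rw [le_div_iff₀ (by positivity)]
      have : rr x ≤ 2 := by rw [abs_of_nonpos hx0] at r2; linarith
      have : rr x ^ 3 ≤ 2 ^ 3 := by gcongr
      calc |Φ x| * rr x ^ 3 ≤ (2560 + 4 * s0) * 2 ^ 3 := by gcongr
        _ ≤ _ := by linarith

open Polynomial in
lemma derivative_hermite_succ' (m : ℕ) :
    derivative (hermite (m + 1)) = ((m : ℤ[X]) + 1) * hermite m := by
  induction m with
  | zero => simp
  | succ m ih =>
    rw [hermite_succ (m + 1), derivative_sub, derivative_mul, ih]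
    simp only [derivative_mul, derivative_X, derivative_add, derivative_natCast, derivative_one, one_mul]
    have := hermite_succ m
    rw [show derivative (hermite m) = X * hermite m - hermite (m + 1) by rw [this]; ring]
    push_cast
    ring

/-- real Hermite polynomial -/
noncomputable def Hp (m : ℕ) : Polynomial ℝ := (Polynomial.hermite m).map (Int.castRingHom ℝ)

lemma hermiteP_eq (m : ℕ) (t : ℝ) : hermiteP m t = (Hp m).eval t := by
  rw [hermiteP, Hp, Polynomial.eval_map]
  have h := Polynomial.hermite_eq_deriv_gaussian m t
  have e : (fun t : ℝ => Real.exp (-t ^ 2 / 2)) = fun y => Real.exp (-(y ^ 2 / 2)) := by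
    funext y; congr 1; ring
  rw [iteratedDeriv_eq_iterate, e]
  have h2 : (Polynomial.aeval t) (Polynomial.hermite m) = Polynomial.eval₂ (Int.castRingHom ℝ) t (Polynomial.hermite m) := rfl
  rw [← h2, h, Real.exp_neg]
  field_simp

lemma Hp_deriv (m : ℕ) : Polynomial.derivative (Hp (m + 1)) = ((m : Polynomial ℝ) + 1) * Hp m := by
  rw [Hp, Polynomial.derivative_map, derivative_hermite_succ']
  simp [Hp]

lemma Hp_succ (m : ℕ) : Hp (m + 1) = Polynomial.X * Hp m - Polynomial.derivative (Hp m) := by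
  rw [Hp, Polynomial.hermite_succ]
  simp [Hp, Polynomial.derivative_map]

lemma Hp_zero : Hp 0 = 1 := by simp [Hp]
lemma Hp_one : Hp 1 = Polynomial.X := by simp [Hp]

lemma Hp_three (m : ℕ) (t : ℝ) : (Hp (m + 2)).eval t = t * (Hp (m + 1)).eval t - (m + 1) * (Hp m).eval t := by
  rw [Hp_succ (m + 1), Hp_deriv]; simp

lemma Hp_neg (m : ℕ) (t : ℝ) : (Hp m).eval (-t) = (-1) ^ m * (Hp m).eval t ∧
    (Hp (m + 1)).eval (-t) = (-1) ^ (m + 1) * (Hp (m + 1)).eval t := by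
  induction m with
  | zero => simp [Hp_zero, Hp_one]
  | succ m ih =>
    refine ⟨ih.2, ?_⟩
    rw [Hp_three, Hp_three, ih.1, ih.2]; ring

lemma Hp_value (k : ℕ) : ((Hp (2 * k)).eval 0) ^ 4 * (2 * k + 1) ≤ ((2 * k).factorial : ℝ) ^ 2 := by
  induction k with
  | zero => simp [Hp_zero]
  | succ k ih =>
    rw [show 2 * (k + 1) = 2 * k + 2 by ring, Hp_three, Nat.factorial_succ, Nat.factorial_succ]
    push_cast
    set v := (Hp (2 * k)).eval 0
    set f := ((2 * k).factorial : ℝ)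
    calc _ = (2 * k + 1 : ℝ) ^ 3 * (2 * k + 3) * (v ^ 4 * (2 * k + 1)) := by ring
      _ ≤ (2 * k + 1 : ℝ) ^ 3 * (2 * k + 3) * f ^ 2 := by gcongr
      _ ≤ ((2 * k + 1 : ℝ) ^ 2 * (2 * k + 2) ^ 2) * f ^ 2 := by
          apply mul_le_mul_of_nonneg_right _ (by positivity)
          have hk : (0:ℝ) ≤ k := by positivity
          have : (2 * k + 1 : ℝ) * (2 * k + 3) ≤ (2 * k + 2) ^ 2 := by nlinarith
          have h2 : (0:ℝ) ≤ (2 * k + 1) ^ 2 := by positivity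
          nlinarith
      _ = _ := by ring

noncomputable def kap (m : ℕ) : ℝ := (2 * Real.pi) ^ (-(1:ℝ)/4) * ((m.factorial : ℝ)) ^ (-(1:ℝ)/2)

lemma osc_eq (m : ℕ) (t : ℝ) : osc m t = kap m * ((Hp m).eval t * Real.exp (-t ^ 2 / 4)) := by
  rw [osc, hermiteP_eq, kap]; ring

lemma kap_succ (m : ℕ) : kap m = √((m + 1 : ℕ) : ℝ) * kap (m + 1) := by
  rw [kap, kap, Nat.factorial_succ]
  push_cast
  rw [Real.mul_rpow (x := (m : ℝ) + 1) (by positivity) (by positivity), Real.sqrt_eq_rpow]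
  generalize (2 * Real.pi) ^ (-(1:ℝ)/4) = w
  have : ((m : ℝ) + 1) ^ (1 / 2 : ℝ) * ((m : ℝ) + 1) ^ (-(1 : ℝ) / 2) = 1 := by
    rw [← Real.rpow_add (by positivity)]; norm_num
  linear_combination (-w * ((m.factorial : ℝ)) ^ (-(1:ℝ)/2)) * this

lemma gauss_deriv (t : ℝ) : HasDerivAt (fun t : ℝ => Real.exp (-t ^ 2 / 4)) (-(t / 2) * Real.exp (-t ^ 2 / 4)) t := by
  have d : HasDerivAt (fun t : ℝ => -t ^ 2 / 4) (-(t / 2)) t := by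
    refine (((hasDerivAt_id t).pow 2).neg.div_const 4).congr_deriv ?_
    simp only [id, Nat.cast_ofNat, pow_one, show (2 - 1 : ℕ) = 1 from rfl]
    ring
  exact d.exp.congr_deriv (by ring)

lemma osc_deriv (m : ℕ) (t : ℝ) :
    HasDerivAt (osc (m + 1)) (-(t / 2) * osc (m + 1) t + √((m + 1 : ℕ) : ℝ) * osc m t) t := by
  have e : osc (m + 1) = fun t => kap (m + 1) * ((Hp (m + 1)).eval t * Real.exp (-t ^ 2 / 4)) := by
    funext t; exact osc_eq _ _
  have d := (((Hp (m + 1)).hasDerivAt t).mul (gauss_deriv t)).const_mul (kap (m + 1))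
  rw [osc_eq m, e]
  refine d.congr_deriv ?_
  rw [Hp_deriv, kap_succ m]
  have hs : √((m + 1 : ℕ) : ℝ) * √((m + 1 : ℕ) : ℝ) = m + 1 := by
    rw [Real.mul_self_sqrt (by positivity)]; push_cast; ring
  simp only [Polynomial.eval_mul, Polynomial.eval_add, Polynomial.eval_natCast, Polynomial.eval_one]
  linear_combination (-kap (m + 1) * ((Hp m).eval t * Real.exp (-t ^ 2 / 4))) * hs

lemma osc_deriv' (m : ℕ) (t : ℝ) :
    HasDerivAt (osc m) ((t / 2) * osc m t - √((m + 1 : ℕ) : ℝ) * osc (m + 1) t) t := by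
  have e : osc m = fun t => kap m * ((Hp m).eval t * Real.exp (-t ^ 2 / 4)) := by
    funext t; exact osc_eq _ _
  have d := (((Hp m).hasDerivAt t).mul (gauss_deriv t)).const_mul (kap m)
  rw [osc_eq (m + 1), e]
  refine d.congr_deriv ?_
  rw [Hp_succ, kap_succ m]
  simp only [Polynomial.eval_mul, Polynomial.eval_sub, Polynomial.eval_X]
  ring

lemma poly_gauss_tendsto (p : Polynomial ℝ) :
    Tendsto (fun t => p.eval t * Real.exp (-t ^ 2 / 4)) atTop (nhds 0) := by
  have h := (Polynomial.tendsto_div_exp_atTop p).abs.mul_const (Real.exp 1)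
  simp only [abs_zero, zero_mul] at h
  refine squeeze_zero_norm (fun t => ?_) h
  rw [Real.norm_eq_abs, abs_mul, abs_div, abs_of_pos (Real.exp_pos _), abs_of_pos (Real.exp_pos t),
    div_mul_eq_mul_div, mul_div_assoc, ← Real.exp_sub]
  gcongr
  nlinarith [sq_nonneg (t - 2)]

lemma poly_gauss_integrable (p : Polynomial ℝ) :
    Integrable (fun t => p.eval t * Real.exp (-t ^ 2 / 4)) := by
  simp only [Polynomial.eval_eq_sum_range, Finset.sum_mul]
  apply integrable_finsetSum
  intro i _
  have := (integrable_rpow_mul_exp_neg_mul_sq (b := 1 / 4) (by norm_num) (s := i)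
    (by have : (0:ℝ) ≤ i := by positivity
        linarith)).const_mul (p.coeff i)
  refine this.congr (Filter.Eventually.of_forall fun t => ?_)
  simp only [Real.rpow_natCast, mul_assoc]
  congr 3; ring

lemma osc_integrable (m : ℕ) : Integrable (osc m) := by
  have e : osc m = fun t => kap m * ((Hp m).eval t * Real.exp (-t ^ 2 / 4)) := by
    funext t; exact osc_eq _ _
  rw [e]
  exact (poly_gauss_integrable _).const_mul _

/-- polynomial times osc tends to zero -/
lemma osc_poly_tendsto (m : ℕ) (p : Polynomial ℝ) : Tendsto (fun t => p.eval t * osc m t) atTop (nhds 0) := by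
  have := (poly_gauss_tendsto (p * Hp m)).const_mul (kap m)
  rw [mul_zero] at this
  refine this.congr (fun t => ?_)
  rw [osc_eq, Polynomial.eval_mul]; ring

lemma osc_zero_sq (k : ℕ) : osc (2 * k) 0 ^ 2 * √((2 * k : ℕ) : ℝ) ≤ 1 := by
  rw [osc_eq]
  have hv := Hp_value k
  set v := (Hp (2 * k)).eval 0
  have e1 : kap (2 * k) ^ 2 ≤ 1 / ((2 * k).factorial : ℝ) := by
    rw [kap, mul_pow, ← Real.rpow_natCast (_ ^ _) 2, ← Real.rpow_natCast (_ ^ _) 2,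
      ← Real.rpow_mul (by positivity), ← Real.rpow_mul (by positivity)]
    have a : (2 * Real.pi) ^ (-(1:ℝ)/4 * ((2 : ℕ) : ℝ)) ≤ 1 := by
      apply Real.rpow_le_one_of_one_le_of_nonpos
      · nlinarith [Real.pi_gt_three]
      · norm_num
    have b : ((2 * k).factorial : ℝ) ^ (-(1:ℝ)/2 * ((2 : ℕ) : ℝ)) = 1 / ((2 * k).factorial : ℝ) := by
      rw [show (-(1:ℝ)/2 * ((2 : ℕ) : ℝ)) = -1 by norm_num, Real.rpow_neg_one, one_div]
    rw [b]
    have : 0 ≤ 1 / ((2 * k).factorial : ℝ) := by positivity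
    nlinarith
  have hf : (0:ℝ) < ((2 * k).factorial : ℝ) := by positivity
  set f := ((2 * k).factorial : ℝ)
  have e2 : v ^ 2 * √((2 * k : ℕ) : ℝ) ≤ f := by
    apply abs_le_of_sq_le_sq' _ hf.le |>.2
    rw [mul_pow, Real.sq_sqrt (by positivity)]
    push_cast
    have : 0 ≤ v ^ 4 := by positivity
    nlinarith
  simp only [ne_eq, OfNat.ofNat_ne_zero, not_false_eq_true, zero_pow, neg_zero, zero_div, Real.exp_zero, mul_one]
  calc (kap (2 * k) * v) ^ 2 * √((2 * k : ℕ) : ℝ) = kap (2 * k) ^ 2 * (v ^ 2 * √((2 * k : ℕ) : ℝ)) := by ring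
    _ ≤ 1 / f * f := by gcongr
    _ = 1 := by field_simp

lemma osc_neg {n : ℕ} (hn : Even n) (t : ℝ) : osc n (-t) = osc n t := by
  rw [osc_eq, osc_eq, (Hp_neg n t).1, hn.neg_one_pow]; simp

lemma epsF_sub {f : ℝ → ℝ} (hf : Integrable f) (c x : ℝ) :
    epsF f x - epsF f c = ∫ y in c..x, f y := by
  have key : ∀ x, ∫ y, Real.sign (x - y) * f y = 2 * (∫ y in Iic x, f y) - ∫ y, f y := by
    intro x
    have h1 : ∫ y, Real.sign (x - y) * f y = ∫ y, (2 * (Iic x).indicator f y - f y) := by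
      apply integral_congr_ae
      have : ∀ᵐ y : ℝ, y ≠ x := by
        simp [ae_iff, measure_singleton]
      filter_upwards [this] with y hy
      rcases lt_or_gt_of_ne hy with h | h
      · rw [Real.sign_of_pos (by linarith), indicator_of_mem (show y ∈ Iic x from h.le)]; ring
      · rw [Real.sign_of_neg (by linarith), indicator_of_notMem (by simpa using h)]; ring
    rw [h1, integral_sub ((hf.indicator measurableSet_Iic).const_mul 2) hf, integral_const_mul,
      integral_indicator measurableSet_Iic]
  rw [epsF, epsF, key, key, ← intervalIntegral.integral_Iic_sub_Iic hf.integrableOn hf.integrableOn]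
  ring

lemma epsF_symm {f : ℝ → ℝ} (c : ℝ) (hs : ∀ y, f (2 * c - y) = f y) : epsF f c = 0 := by
  have h := integral_sub_left_eq_self (fun y => Real.sign (c - y) * f y) volume (2 * c)
  have e : ∀ y, Real.sign (c - (2 * c - y)) * f (2 * c - y) = -(Real.sign (c - y) * f y) := by
    intro y
    rw [hs, show c - (2 * c - y) = -(c - y) by ring, Real.sign_neg]; ring
  simp only [e] at h
  rw [integral_neg] at h
  rw [epsF]
  linarith

lemma psi_setup (n : ℕ) (hn : 2 ≤ n) (he : Even n) :
    WK ((n : ℝ) ^ ((1:ℝ)/3)) (psiN n) (deriv (psiN n)) (epsPsi n) ∧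
    ∀ x, psiUp n (n - 1) x = deriv (psiN n) x / ((n : ℝ) ^ ((1:ℝ)/3)) +
      (1 + x / (2 * ((n : ℝ) ^ ((1:ℝ)/3)) ^ 2)) * psiN n x := by
  obtain ⟨m, rfl⟩ : ∃ m, n = m + 1 := ⟨n - 1, by omega⟩
  have hn0 : (0:ℝ) < ((m + 1 : ℕ) : ℝ) := by positivity
  have hn1 : (1:ℝ) ≤ ((m + 1 : ℕ) : ℝ) := by exact_mod_cast (by omega)
  set n := m + 1 with hnm
  set α := (n : ℝ) ^ ((1:ℝ)/6) with hα
  have hα0 : 0 < α := by positivity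
  have hN : (n : ℝ) ^ ((1:ℝ)/3) = α ^ 2 := by
    rw [hα, ← Real.rpow_natCast, ← Real.rpow_mul hn0.le]; norm_num
  have hsq : √(n : ℝ) = α ^ 3 := by
    rw [Real.sqrt_eq_rpow, hα, ← Real.rpow_natCast, ← Real.rpow_mul hn0.le]; norm_num
  have hn6 : (n : ℝ) = α ^ 6 := by
    rw [hα, ← Real.rpow_natCast, ← Real.rpow_mul hn0.le]; norm_num
  have hinv : (n : ℝ) ^ (-(1:ℝ)/6) = α⁻¹ := by
    rw [hα, ← Real.rpow_neg hn0.le]; norm_num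
  set β := (n : ℝ) ^ ((1:ℝ)/12) with hβ
  have hββ : β ^ 2 = α := by
    rw [hβ, hα, ← Real.rpow_natCast, ← Real.rpow_mul hn0.le]; norm_num
  have hα1 : 1 ≤ α := Real.one_le_rpow hn1 (by norm_num)
  rw [hN]
  let τ : ℝ → ℝ := fun x => 2 * α ^ 3 + α⁻¹ * x
  have hτ : ∀ x, HasDerivAt τ α⁻¹ x := fun x => by
    exact (((hasDerivAt_id x).const_mul α⁻¹).const_add (2 * α ^ 3)).congr_deriv (by simp)
  have hψ : ∀ x, psiN n x = β * osc n (τ x) := fun x => by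
    simp only [psiN, psiUp, hsq, hinv, τ, hβ]
  have hψm : ∀ x, psiUp n m x = β * osc m (τ x) := fun x => by
    simp only [psiUp, hsq, hinv, τ, hβ]
  have hψf : psiN n = fun x => β * osc n (τ x) := funext hψ
  have d1 : ∀ x, HasDerivAt (psiN n) (α⁻¹ * (-(τ x / 2) * psiN n x + α ^ 3 * psiUp n m x)) x := by
    intro x
    have := ((osc_deriv m (τ x)).comp x (hτ x)).const_mul β
    rw [hψ, hψm, hψf]
    refine this.congr_deriv ?_
    rw [← hnm, hsq]; ring
  have d2 : ∀ x, HasDerivAt (psiUp n m) (α⁻¹ * (τ x / 2 * psiUp n m x - α ^ 3 * psiN n x)) x := by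
    intro x
    have := ((osc_deriv' m (τ x)).comp x (hτ x)).const_mul β
    rw [hψ, hψm, show psiUp n m = fun x => β * osc m (τ x) from funext hψm]
    refine this.congr_deriv ?_
    rw [← hnm, hsq]; ring
  have D1 : deriv (psiN n) = fun x => α⁻¹ * (-(τ x / 2) * psiN n x + α ^ 3 * psiUp n m x) :=
    funext fun x => (d1 x).deriv
  have hc : τ (-(2 * (α ^ 2) ^ 2)) = 0 := by simp only [τ]; field_simp; ring
  have hint : Integrable (psiN n) := by
    rw [hψf]
    have := ((osc_integrable n).comp_add_left (2 * α ^ 3)).comp_mul_left' (inv_ne_zero hα0.ne')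
    exact this.const_mul β
  have hcont : Continuous (psiN n) := continuous_iff_continuousAt.2 fun x => (d1 x).continuousAt
  have heps0 : epsPsi n (-(2 * (α ^ 2) ^ 2)) = 0 := by
    apply epsF_symm
    intro y
    rw [hψ, hψ, ← osc_neg he]
    congr 2
    simp only [τ]; field_simp; ring
  have htt : Tendsto τ atTop atTop := by
    apply tendsto_atTop_add_const_left
    exact Tendsto.const_mul_atTop (inv_pos.2 hα0) tendsto_id
  have tp : ∀ (k : ℕ) (p : Polynomial ℝ), Tendsto (fun x => p.eval (τ x) * osc k (τ x)) atTop (nhds 0) :=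
    fun k p => (osc_poly_tendsto k p).comp htt
  have T0 : Tendsto (psiN n) atTop (nhds 0) := by
    have := (tp n 1).const_mul β
    rw [mul_zero] at this
    refine this.congr fun x => ?_
    rw [hψ]; simp
  have T2 : Tendsto (fun x => τ x ^ 2 * psiN n x) atTop (nhds 0) := by
    have := (tp n (Polynomial.X ^ 2)).const_mul β
    rw [mul_zero] at this
    refine this.congr fun x => ?_
    rw [hψ]; simp; ring
  have T1 : Tendsto (deriv (psiN n)) atTop (nhds 0) := by
    rw [D1]
    have a := (tp n (Polynomial.X)).const_mul (β * α⁻¹ * (-(1 / 2)))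
    have b := (tp m 1).const_mul (β * α⁻¹ * α ^ 3)
    have := a.add b
    simp only [mul_zero, add_zero] at this
    refine this.congr fun x => ?_
    rw [hψ, hψm]; simp; ring
  have qid : ∀ x, (x + x ^ 2 / (4 * (α ^ 2) ^ 2) - 1 / (2 * α ^ 2)) = (τ x ^ 2 / 4 - 1 / 2 - α ^ 6) / α ^ 2 := by
    intro x; simp only [τ]; field_simp; ring
  constructor
  · refine ⟨one_le_pow₀ hα1, ?_, ?_, ?_, ?_, heps0, ?_, ?_, ?_⟩
    · intro x; rw [D1]; exact d1 x
    · intro x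
      rw [D1, qid]
      have := ((((hτ x).div_const 2).neg.mul (d1 x)).add ((d2 x).const_mul (α ^ 3))).const_mul α⁻¹
      refine this.congr_deriv ?_
      simp only [Pi.neg_apply]
      field_simp
      ring
    · intro x
      have e : epsPsi n = fun x => epsPsi n 0 + ∫ y in (0:ℝ)..x, psiN n y := by
        funext x
        have := epsF_sub hint 0 x
        simp only [epsPsi]
        linarith
      rw [e]
      exact (intervalIntegral.integral_hasDerivAt_right (hcont.intervalIntegrable _ _)
        hcont.stronglyMeasurable.stronglyMeasurableAtFilter hcont.continuousAt).const_add _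
    · rw [D1]
      simp only [hc, hψm]
      have : osc m 0 = 0 := by
        have hodd : Odd m := by
          rw [hnm] at he
          exact Nat.not_even_iff_odd.1 (Nat.even_add_one.1 he)
        have h := (Hp_neg m 0).1
        rw [hodd.neg_one_pow, neg_zero] at h
        rw [osc_eq, show (Hp m).eval 0 = 0 by linarith]; simp
      rw [this]; simp
    · obtain ⟨k, hk⟩ := he
      have hk2 : n = 2 * k := by omega
      have := osc_zero_sq k
      rw [← hk2, hsq] at this
      rw [hψ, hc, mul_pow, hββ, le_div_iff₀ (by positivity)]
      calc _ = osc n 0 ^ 2 * α ^ 3 := by ring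
        _ ≤ 1 := this
    · simpa using T0.mul T1
    · have a := T1.mul T1
      have b := (T2.mul T0).const_mul (1 / (4 * α ^ 2))
      have c := (T0.mul T0).const_mul ((1 / 2 + α ^ 6) / α ^ 2)
      have := (a.sub b).add c
      simp only [mul_zero, sub_zero, add_zero] at this
      refine this.congr fun x => ?_
      rw [qid]; field_simp; ring
  · intro x
    rw [D1, show n - 1 = m by omega]
    simp only [τ]
    field_simp
    ring

lemma kernel_int_abs {Nf Nf' Bf : ℝ → ℝ} {ρ K L : ℝ} (hρ : 1 ≤ ρ) (hK : 0 ≤ K) (hL : 0 ≤ L)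
    (hB : ∀ s, HasDerivAt Bf (Nf s) s) (hN : ∀ s, HasDerivAt Nf (Nf' s) s) (h0 : Nf 0 = 0)
    (hnear : ∀ s, 0 ≤ s → s ≤ L → s ≤ 1 / ρ ^ 2 → |Nf' s| ≤ K * ρ ^ 2)
    (hfar : ∀ s, 1 / ρ ^ 2 ≤ s → s ≤ L → |Bf s| ≤ K * √s / ρ) :
    |∫ s in (0:ℝ)..L, dslope Nf 0 s| ≤ 5 * K := by
  have hρ0 : 0 < ρ := by linarith
  have hg : Continuous (dslope Nf 0) := by
    rw [← continuousOn_univ, continuousOn_dslope univ_mem]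
    exact ⟨fun s _ => (hN s).continuousAt.continuousWithinAt, (hN 0).differentiableAt⟩
  have hI : ∀ s, HasDerivAt (fun t => ∫ s in (0:ℝ)..t, dslope Nf 0 s) (dslope Nf 0 s) s := fun s =>
    intervalIntegral.integral_hasDerivAt_right (hg.intervalIntegrable _ _)
        hg.stronglyMeasurable.stronglyMeasurableAtFilter hg.continuousAt
  have hgs : ∀ s, s ≠ 0 → dslope Nf 0 s = Nf s / s := by
    intro s hs
    rw [dslope_of_ne _ hs, slope_def_field, h0]; simp
  set δ := 1 / ρ ^ 2 with hδ
  have hδ0 : 0 < δ := by positivity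
  have near : ∀ l, 0 ≤ l → l ≤ L → l ≤ δ → |∫ s in (0:ℝ)..l, dslope Nf 0 s| ≤ K := by
    intro l hl hlL hlδ
    have := abs_sub_le_of_deriv (f := fun t => ∫ s in (0:ℝ)..t, dslope Nf 0 s) (f' := dslope Nf 0)
      (g := fun t => K * ρ ^ 2 * t) (g' := fun _ => K * ρ ^ 2) hl (fun s _ => hI s)
      (fun s _ => by simpa using (hasDerivAt_id s).const_mul (K * ρ ^ 2)) (fun s hs => by
        rcases eq_or_lt_of_le hs.1 with h | h
        · rw [← h, dslope_same, (hN 0).deriv]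
          exact hnear 0 le_rfl (by linarith) hδ0.le
        · rw [hgs s h.ne', abs_div, abs_of_pos h, div_le_iff₀ h]
          have := abs_sub_le_of_deriv (f := Nf) (f' := Nf')
            (g := fun t => K * ρ ^ 2 * t) (g' := fun _ => K * ρ ^ 2) h.le (fun s _ => hN s)
            (fun s _ => by simpa using (hasDerivAt_id s).const_mul (K * ρ ^ 2)) (fun t ht =>
              hnear t ht.1 (by linarith [ht.2, hs.2]) (by linarith [ht.2, hs.2]))
          simpa [h0] using this)
    simp only [intervalIntegral.integral_same, sub_zero, mul_zero] at this
    refine this.trans ?_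
    calc K * ρ ^ 2 * l ≤ K * ρ ^ 2 * δ := by gcongr
      _ = K := by rw [hδ]; field_simp
  rcases le_total L δ with hLδ | hLδ
  · have := near L hL le_rfl hLδ
    linarith
  · have n1 := near δ hδ0.le hLδ le_rfl
    have key := abs_sub_le_of_deriv (f := fun t => (∫ s in (0:ℝ)..t, dslope Nf 0 s) - Bf t / t)
      (f' := fun t => Bf t / t ^ 2)
      (g := fun t => -2 * (K / ρ) * (√t)⁻¹) (g' := fun t => K / ρ / (t * √t)) hLδ
      (fun s hs => by
        have hs0 : s ≠ 0 := by linarith [hs.1]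
        refine ((hI s).sub ((hB s).div (hasDerivAt_id s) hs0)).congr_deriv ?_
        rw [hgs s hs0]
        simp only [id]
        field_simp
        ring)
      (fun s hs => by
        have hs0 : 0 < s := by linarith [hs.1]
        have hq : 0 < √s := Real.sqrt_pos.2 hs0
        refine (((Real.hasDerivAt_sqrt hs0.ne').inv hq.ne').const_mul (-2 * (K / ρ))).congr_deriv ?_
        have e : s = √s ^ 2 := (Real.sq_sqrt hs0.le).symm
        rw [Real.sq_sqrt hs0.le]
        field_simp)
      (fun s hs => by
        have hs0 : 0 < s := by linarith [hs.1]
        have hq : 0 < √s := Real.sqrt_pos.2 hs0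
        rw [abs_div, abs_of_pos (show 0 < s ^ 2 by positivity)]
        calc |Bf s| / s ^ 2 ≤ K * √s / ρ / s ^ 2 := by gcongr; exact hfar s hs.1 hs.2
          _ = K / ρ / (s * √s) := by
            have e : s ^ 2 = s * (√s * √s) := by rw [Real.mul_self_sqrt hs0.le]; ring
            rw [e]; field_simp)
    have hL0 : 0 < L := by linarith
    have hsδ : √δ = 1 / ρ := by
      rw [hδ, show 1 / ρ ^ 2 = (1 / ρ) ^ 2 by ring]; exact Real.sqrt_sq (by positivity)
    have b1 : ∀ s, δ ≤ s → s ≤ L → |Bf s / s| ≤ K := by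
      intro s hs hsL
      have hs0 : 0 < s := by linarith
      have hq : 0 < √s := Real.sqrt_pos.2 hs0
      have hq2 : 1 / ρ ≤ √s := by rw [← hsδ]; exact Real.sqrt_le_sqrt hs
      rw [abs_div, abs_of_pos hs0, div_le_iff₀ hs0]
      refine (hfar s hs hsL).trans ?_
      calc K * √s / ρ = K * √s * (1 / ρ) := by ring
        _ ≤ K * √s * √s := by gcongr
        _ = K * s := by rw [mul_assoc, Real.mul_self_sqrt hs0.le]
    have c1 := b1 L hLδ le_rfl
    have c2 := b1 δ le_rfl hLδ
    have c3 : 0 ≤ 2 * (K / ρ) * (√L)⁻¹ := by positivity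
    have c4 : 2 * (K / ρ) * (√δ)⁻¹ = 2 * K := by rw [hsδ]; field_simp
    rw [abs_le] at *
    constructor <;> linarith [key.1, key.2, c1.1, c1.2, c2.1, c2.2, n1.1, n1.2]

def Bds (C N : ℝ) (ψ dψ Φ : ℝ → ℝ) : Prop := ∀ x, -(2 * N ^ 2) ≤ x →
    |ψ x| ≤ C / rr x ∧ |dψ x| ≤ C * rr x ∧
    |(x + x ^ 2 / (4 * N ^ 2) - 1 / (2 * N)) * ψ x| ≤ C * rr x ^ 3 ∧ |Φ x| ≤ C ∧
    (x ≤ 0 → |Φ x| ≤ C / rr x ^ 3) ∧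
    (0 ≤ x → |ψ x| ≤ C / (1 + |x|) ^ 3 ∧ |dψ x| ≤ C / (1 + |x|) ^ 3)

lemma near_bd {C N : ℝ} {ψ dψ Φ : ℝ → ℝ} (hC : 1 ≤ C) (hb : Bds C N ψ dψ Φ) {x u : ℝ}
    (hx : -(2 * N ^ 2) ≤ x) (hu : -(2 * N ^ 2) ≤ u) (hd : |u - x| ≤ 1) :
    |dψ u * dψ x - (u + u ^ 2 / (4 * N ^ 2) - 1 / (2 * N)) * ψ u * ψ x| ≤ 10 * C ^ 2 * rr x ^ 2 := by
  obtain ⟨a1, a2, a3, -⟩ := hb x hx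
  obtain ⟨b1, b2, b3, -⟩ := hb u hu
  have r1 := rr_one_le x
  have r2 := rr_one_le u
  have hr : rr u ≤ 2 * rr x := by
    apply le_of_pow_le_pow_left₀ (n := 4) (by norm_num) (by linarith)
    rw [mul_pow, rr_pow, rr_pow]
    have : |u| ≤ |u - x| + |x| := by have := abs_add_le (u - x) x; simpa using this
    have := abs_nonneg x
    linarith
  have h0 : 0 < rr x := by linarith
  calc _ ≤ |dψ u| * |dψ x| + |(u + u ^ 2 / (4 * N ^ 2) - 1 / (2 * N)) * ψ u| * |ψ x| := by
        rw [← abs_mul, ← abs_mul]; exact abs_sub _ _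
    _ ≤ (C * (2 * rr x)) * (C * rr x) + (C * (2 * rr x) ^ 3) * (C / rr x) := by
        gcongr
        · exact b2.trans (by gcongr)
        · exact b3.trans (by gcongr)
    _ = _ := by field_simp; ring

lemma far_bd {C N : ℝ} {ψ dψ Φ : ℝ → ℝ} (hC : 1 ≤ C) (hb : Bds C N ψ dψ Φ) {x u : ℝ}
    (hx : -(2 * N ^ 2) ≤ x) (hu : -(2 * N ^ 2) ≤ u) (hd : 1 / rr x ^ 2 ≤ |u - x|) :
    |Φ u * dψ x - ψ u * ψ x| ≤ 10 * C ^ 2 * √(|u - x|) / rr x := by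
  obtain ⟨a1, a2, a3, a4, a5, a6⟩ := hb x hx
  obtain ⟨b1, b2, b3, b4, b5, b6⟩ := hb u hu
  have r1 := rr_one_le x
  have r2 := rr_one_le u
  have p1 := rr_pow x
  have p2 := rr_pow u
  set ρ := rr x
  set η := rr u
  have h0 : 0 < ρ := by linarith
  have h0' : 0 < η := by linarith
  set σ := √(|u - x|) with hσ
  have hσ1 : 1 / ρ ≤ σ := by
    apply Real.le_sqrt_of_sq_le
    rw [div_pow, one_pow]; exact hd
  have hσ0 : 0 ≤ σ := Real.sqrt_nonneg _
  have hux : |x| ≤ |u - x| + |u| := by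
    have := abs_add_le (x - u) u
    rw [abs_sub_comm x u] at this; simpa using this
  have big : ρ ^ 4 / 2 ≤ |u - x| → ρ ^ 2 / 2 ≤ σ := by
    intro h
    apply Real.le_sqrt_of_sq_le
    have : 0 ≤ ρ ^ 4 := by positivity
    nlinarith
  have dich : ρ ≤ 2 * η ∨ ρ ^ 4 / 2 ≤ |u - x| := by
    by_cases h : ρ ^ 4 / 2 ≤ |u - x|
    · exact Or.inr h
    · left
      push Not at h
      apply le_of_pow_le_pow_left₀ (n := 4) (by norm_num) (by linarith)
      rw [mul_pow]
      have := abs_nonneg u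
      nlinarith
  -- bound for products
  have ss : C ^ 2 / ρ ^ 2 ≤ C ^ 2 * σ / ρ := by
    calc C ^ 2 / ρ ^ 2 = C ^ 2 * (1 / ρ) / ρ := by field_simp
      _ ≤ _ := by gcongr
  have bb : ρ ^ 2 / 2 ≤ σ → C ^ 2 * ρ ≤ 2 * (C ^ 2 * σ / ρ) := by
    intro h
    calc C ^ 2 * ρ = 2 * (C ^ 2 * (ρ ^ 2 / 2) / ρ) := by field_simp
      _ ≤ _ := by gcongr
  have hψC : |ψ u| ≤ C := b1.trans (div_le_self (by linarith) r2)
  have e1 : |ψ u| * |ψ x| ≤ 2 * (C ^ 2 * σ / ρ) := by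
    rcases dich with h | h
    · calc |ψ u| * |ψ x| ≤ (C / (ρ / 2)) * (C / ρ) := by
            gcongr
            exact b1.trans (by gcongr; linarith)
        _ = 2 * (C ^ 2 / ρ ^ 2) := by field_simp
        _ ≤ _ := by linarith
    · calc |ψ u| * |ψ x| ≤ C * (C / ρ) := by gcongr
        _ = C ^ 2 / ρ := by ring
        _ ≤ C ^ 2 * ρ := by
          rw [div_le_iff₀ h0]; nlinarith [sq_nonneg C, mul_self_nonneg ρ, mul_nonneg (sq_nonneg C) (show 0 ≤ ρ * ρ - 1 by nlinarith)]
        _ ≤ _ := bb (big h)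
  have e2 : |Φ u| * |dψ x| ≤ 8 * (C ^ 2 * σ / ρ) := by
    have hpos : 0 ≤ C ^ 2 * σ / ρ := by positivity
    rcases le_total 0 x with hx0 | hx0
    · have : |dψ x| ≤ C / ρ ^ 2 := by
        refine (a6 hx0).2.trans ?_
        rw [← p1]
        gcongr
        rw [← pow_mul]
        exact pow_le_pow_right₀ r1 (by norm_num)
      calc |Φ u| * |dψ x| ≤ C * (C / ρ ^ 2) := by gcongr
        _ = C ^ 2 / ρ ^ 2 := by ring
        _ ≤ _ := by linarith
    · have gen : ρ ^ 4 / 2 ≤ |u - x| → |Φ u| * |dψ x| ≤ 8 * (C ^ 2 * σ / ρ) := by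
        intro h
        calc |Φ u| * |dψ x| ≤ C * (C * ρ) := by gcongr
          _ = C ^ 2 * ρ := by ring
          _ ≤ 2 * (C ^ 2 * σ / ρ) := bb (big h)
          _ ≤ _ := by linarith
      rcases dich with h | h
      · rcases le_total u 0 with hu0 | hu0
        · calc |Φ u| * |dψ x| ≤ (C / (ρ / 2) ^ 3) * (C * ρ) := by
                gcongr
                exact (b5 hu0).trans (by gcongr; linarith)
            _ = 8 * (C ^ 2 / ρ ^ 2) := by field_simp; try norm_num
            _ ≤ _ := by linarith
        · by_cases hρ : 2 ≤ ρ ^ 4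
          · apply gen
            rw [abs_of_nonpos hx0] at p1
            rw [abs_of_nonneg (by linarith)]
            linarith
          · push Not at hρ
            have h3 : ρ ^ 3 ≤ 2 := by nlinarith [pow_pos h0 3]
            calc |Φ u| * |dψ x| ≤ C * (C * ρ) := by gcongr
              _ = ρ ^ 3 * (C ^ 2 / ρ ^ 2) := by field_simp
              _ ≤ 2 * (C ^ 2 / ρ ^ 2) := by gcongr
              _ ≤ _ := by linarith
      · exact gen h
  calc _ ≤ |Φ u| * |dψ x| + |ψ u| * |ψ x| := by
        rw [← abs_mul, ← abs_mul]; exact abs_sub _ _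
    _ ≤ _ := add_le_add e2 e1
    _ = _ := by ring

lemma dslope_comp_add (f : ℝ → ℝ) (x s : ℝ) : dslope (fun t => f (x + t)) 0 s = dslope f x (x + s) := by
  by_cases hs : s = 0
  · subst hs
    simp only [add_zero, dslope_same]
    rw [deriv_comp_const_add]; simp
  · rw [dslope_of_ne _ hs, dslope_of_ne _ (by simpa using hs), slope_def_field, slope_def_field]; simp

lemma dslope_comp_sub (f : ℝ → ℝ) (x s : ℝ) : dslope (fun t => f (x - t)) 0 s = -dslope f x (x - s) := by
  by_cases hs : s = 0
  · subst hs
    simp only [sub_zero, dslope_same]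
    rw [deriv_comp_const_sub]; simp
  · rw [dslope_of_ne _ hs, dslope_of_ne _ (by simpa [sub_eq_iff_eq_add] using hs), slope_def_field, slope_def_field]
    simp [div_neg]

lemma kernel_bd {C N : ℝ} {ψ dψ Φ : ℝ → ℝ} (hC : 1 ≤ C) (h : WK N ψ dψ Φ) (hb : Bds C N ψ dψ Φ) {x y : ℝ}
    (hx : -(2 * N ^ 2) ≤ x) (hy : -(2 * N ^ 2) ≤ y) :
    |∫ u in x..y, dslope (fun u => ψ u * dψ x - dψ u * ψ x) x u| ≤ 5 * (10 * C ^ 2) := by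
  have r1 := rr_one_le x
  have r0 : 0 < rr x := by linarith
  have hδ1 : 1 / rr x ^ 2 ≤ 1 := by
    rw [div_le_one (by positivity)]; exact one_le_pow₀ r1
  set Nf : ℝ → ℝ := fun u => ψ u * dψ x - dψ u * ψ x with hNf
  let Nf' : ℝ → ℝ := fun u => dψ u * dψ x - (u + u ^ 2 / (4 * N ^ 2) - 1 / (2 * N)) * ψ u * ψ x
  let Bf : ℝ → ℝ := fun u => Φ u * dψ x - ψ u * ψ x
  have dN : ∀ u, HasDerivAt Nf (Nf' u) u := fun u =>
    ((h.h1 u).mul_const (dψ x)).sub ((h.h2 u).mul_const (ψ x))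
  have dB : ∀ u, HasDerivAt Bf (Nf u) u := fun u =>
    ((h.h3 u).mul_const (dψ x)).sub ((h.h1 u).mul_const (ψ x))
  have hNx : Nf x = 0 := by simp only [hNf]; ring
  rcases le_total x y with hxy | hxy
  · have k := kernel_int_abs (Nf := fun s => Nf (x + s)) (Nf' := fun s => Nf' (x + s)) (Bf := fun s => Bf (x + s))
      (ρ := rr x) (K := 10 * C ^ 2) (L := y - x) r1 (by positivity) (by linarith)
      (fun s => (dB (x + s)).comp_const_add x s) (fun s => (dN (x + s)).comp_const_add x s) (by simpa using hNx)
      (fun s hs hsL hsδ => near_bd hC hb hx (by linarith) (by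
        rw [add_sub_cancel_left, abs_of_nonneg hs]; linarith))
      (fun s hs hsL => by
        have hs0 : 0 ≤ s := le_trans (by positivity) hs
        have := far_bd hC hb hx (u := x + s) (by linarith) (by
          rw [add_sub_cancel_left, abs_of_nonneg hs0]; exact hs)
        rw [add_sub_cancel_left, abs_of_nonneg hs0] at this
        exact this)
    simp only [dslope_comp_add] at k
    rw [intervalIntegral.integral_comp_add_left (fun u => dslope Nf x u)] at k
    simpa using k
  · have k := kernel_int_abs (Nf := fun s => Nf (x - s)) (Nf' := fun s => -Nf' (x - s)) (Bf := fun s => -Bf (x - s))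
      (ρ := rr x) (K := 10 * C ^ 2) (L := x - y) r1 (by positivity) (by linarith)
      (fun s => (((dB (x - s)).comp_const_sub x s).neg).congr_deriv (by simp)) (fun s => (dN (x - s)).comp_const_sub x s) (by simpa using hNx)
      (fun s hs hsL hsδ => by
        rw [abs_neg]
        exact near_bd hC hb hx (by linarith) (by
          rw [sub_sub_cancel_left, abs_neg, abs_of_nonneg hs]; linarith))
      (fun s hs hsL => by
        have hs0 : 0 ≤ s := le_trans (by positivity) hs
        have := far_bd hC hb hx (u := x - s) (by linarith) (by
          rw [sub_sub_cancel_left, abs_neg, abs_of_nonneg hs0]; exact hs)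
        rw [sub_sub_cancel_left, abs_neg, abs_of_nonneg hs0] at this
        rw [abs_neg]
        exact this)
    simp only [dslope_comp_sub] at k
    rw [intervalIntegral.integral_neg, intervalIntegral.integral_comp_sub_left (fun u => dslope Nf x u)] at k
    rw [intervalIntegral.integral_symm]
    simpa using k

lemma one_le_S {p w : ℝ} (hp : 0 < p) (hw : 0 < w) : 1 ≤ p / w + w / p := by
  have e : p / w + w / p = (p ^ 2 + w ^ 2) / (p * w) := by field_simp
  rw [e, le_div_iff₀ (by positivity)]
  nlinarith [sq_nonneg (p - w), mul_pos hp hw]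

lemma ratio_le {p w r s : ℝ} (hp : 0 < p) (hw : 0 < w) (hr : 1 ≤ r) (hrp : p ≤ r) (hs : s ≤ 1 + w) :
    s / r ≤ 2 * (p / w + w / p) := by
  have h1 := one_le_S hp hw
  have h2 : 0 < p / w := by positivity
  have h3 : 0 < w / p := by positivity
  have h4 : s / r ≤ 1 + w / p := by
    have hr0 : 0 < r := by linarith
    rw [div_le_iff₀ hr0]
    have : w ≤ w / p * r := by
      rw [div_mul_eq_mul_div, le_div_iff₀ hp]; nlinarith
    nlinarith
  linarith

lemma term1_le {p w r s d : ℝ} (hp : 0 < p) (hw : 0 < w) (hd : 0 < d) (hdd : d ≤ p ^ 4 + w ^ 4)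
    (hr : 1 ≤ r) (hs : 1 ≤ s) (hr1 : r ≤ 1 + p) (hs1 : s ≤ 1 + w) (hrp : p ≤ r) :
    s ^ 3 / r + r * s ≤ 12 * ((p ^ 3 / w + w ^ 3 / p) + (p / w + w / p) / d) := by
  have hS := one_le_S hp hw
  have e1 : 0 < p ^ 3 / w := by positivity
  have e2 : 0 < w ^ 3 / p := by positivity
  have e3 : 0 < (p / w + w / p) / d := by positivity
  have hr0 : 0 < r := by linarith
  rcases lt_or_ge w 1 with h1 | h1
  · have hs2 : s ≤ 2 := by linarith
    have hs3 : s ^ 3 / r ≤ 8 := by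
      rw [div_le_iff₀ hr0]
      have : s ^ 3 ≤ 2 ^ 3 := pow_le_pow_left₀ (by linarith) hs2 3
      nlinarith
    rcases lt_or_ge p 1 with h2 | h2
    · have : 1 / 2 ≤ (p / w + w / p) / d := by
        rw [le_div_iff₀ hd]
        have : p ^ 4 ≤ 1 := pow_le_one₀ hp.le h2.le
        have : w ^ 4 ≤ 1 := pow_le_one₀ hw.le h1.le
        linarith
      have hS2 : 1 / 2 * 2 ≤ 2 * ((p / w + w / p) / d) := by linarith
      have hrs : r * s ≤ 4 := by nlinarith
      have : 1 ≤ (p / w + w / p) / d ∨ d > 1 := by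
        by_cases hd1 : d ≤ 1
        · left
          rw [le_div_iff₀ hd]; linarith
        · right; linarith
      rcases this with h | h
      · linarith
      · have h5 : 1 ≤ (p ^ 3 / w + w ^ 3 / p) := by
          have e : p ^ 3 / w + w ^ 3 / p = (p ^ 4 + w ^ 4) / (p * w) := by field_simp
          rw [e, le_div_iff₀ (by positivity)]
          nlinarith
        linarith
    · have : p ≤ p ^ 3 / w := by
        rw [le_div_iff₀ hw]
        nlinarith [pow_le_pow_right₀ h2 (show 1 ≤ 3 by norm_num)]
      have hrs : r * s ≤ 4 * p := by nlinarith
      linarith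
  · have hs2 : s ≤ 2 * w := by linarith
    have hs3 : s ^ 3 / r ≤ 8 * (w ^ 3 / p) := by
      have : s ^ 3 ≤ (2 * w) ^ 3 := pow_le_pow_left₀ (by linarith) hs2 3
      calc s ^ 3 / r ≤ (2 * w) ^ 3 / p := by gcongr
        _ = _ := by ring
    have hrs : r * s ≤ 4 * (p ^ 3 / w + w ^ 3 / p) := by
      rcases lt_or_ge p 1 with h2 | h2
      · have h3 : w ≤ w ^ 3 / p := by
          rw [le_div_iff₀ hp]
          nlinarith [pow_le_pow_right₀ h1 (show 1 ≤ 3 by norm_num)]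
        have : r * s ≤ 2 * (2 * w) := by gcongr; linarith
        linarith
      · have h3 : r * s ≤ (2 * p) * (2 * w) := by gcongr; linarith
        have e : p ^ 3 / w + w ^ 3 / p = (p ^ 4 + w ^ 4) / (p * w) := by field_simp
        have : p * w ≤ p ^ 3 / w + w ^ 3 / p := by
          rw [e, le_div_iff₀ (by positivity)]
          nlinarith [sq_nonneg (p ^ 2 - w ^ 2), sq_nonneg (p * w)]
        linarith
    linarith

lemma term34_le {p w r s d : ℝ} (hp : 0 < p) (hw : 0 < w) (hd : 0 < d) (hdd : d ≤ p ^ 4 + w ^ 4)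
    (hrp : p ≤ r) (hsw : w ≤ s) :
    1 / (r * s) ≤ (p ^ 3 / w + w ^ 3 / p) / d := by
  have e : p ^ 3 / w + w ^ 3 / p = (p ^ 4 + w ^ 4) / (p * w) := by field_simp
  rw [e, le_div_iff₀ hd]
  calc 1 / (r * s) * d ≤ 1 / (p * w) * (p ^ 4 + w ^ 4) := by
        have : 0 ≤ r := by linarith
        gcongr
    _ = _ := by ring

lemma Pm_bd {C N : ℝ} {ψ dψ Φ : ℝ → ℝ} (hC : 1 ≤ C) (hN : 1 ≤ N) (hb : Bds C N ψ dψ Φ) {x : ℝ}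
    (hx : -(2 * N ^ 2) ≤ x) :
    |dψ x| / N ≤ 2 * (C / rr x) ∧ |dψ x / N + (1 + x / (2 * N ^ 2)) * ψ x| ≤ 3 * (C / rr x) ∧
    (0 ≤ x → |dψ x / N + (1 + x / (2 * N ^ 2)) * ψ x| ≤ 2 * C / (1 + x) ^ 2) := by
  obtain ⟨a1, a2, -, -, -, a6⟩ := hb x hx
  have r1 := rr_one_le x
  have r2 := rr_le x
  have r0 : 0 < rr x := by linarith
  have hN0 : 0 < N := by linarith
  have hc0 : 0 < C / rr x := by positivity
  have tri : |dψ x / N + (1 + x / (2 * N ^ 2)) * ψ x| ≤ |dψ x| / N + |1 + x / (2 * N ^ 2)| * |ψ x| := by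
    refine (abs_add_le _ _).trans ?_
    rw [abs_mul, abs_div, abs_of_pos hN0]
  rcases le_total x 0 with h | h
  · have k1 : |dψ x| / N ≤ 2 * (C / rr x) := by
      have e := rr_pow x
      rw [abs_of_nonpos h] at e
      have k : rr x ^ 2 ≤ 2 * N := by
        apply le_of_sq_le_sq _ (by positivity)
        nlinarith
      rw [div_le_iff₀ hN0]
      refine a2.trans ?_
      rw [show 2 * (C / rr x) * N = C * (2 * N) / rr x by ring, le_div_iff₀ r0]
      nlinarith
    have k2 : |1 + x / (2 * N ^ 2)| ≤ 1 := by
      have : -1 ≤ x / (2 * N ^ 2) := by rw [le_div_iff₀ (by positivity)]; linarith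
      have : x / (2 * N ^ 2) ≤ 0 := div_nonpos_of_nonpos_of_nonneg h (by positivity)
      rw [abs_le]; constructor <;> linarith
    refine ⟨k1, ?_, ?_⟩
    · have : |1 + x / (2 * N ^ 2)| * |ψ x| ≤ 1 * (C / rr x) := by gcongr
      linarith
    · intro h0
      have hx0 : x = 0 := le_antisymm h h0
      obtain ⟨b1, b2⟩ := a6 h0
      subst hx0
      simp only [abs_zero, add_zero, one_pow, div_one] at b1 b2 ⊢
      refine tri.trans ?_
      simp only [zero_div, add_zero, abs_one]
      have : |dψ 0| / N ≤ |dψ 0| := div_le_self (abs_nonneg _) hN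
      linarith
  · obtain ⟨b1, b2⟩ := a6 h
    rw [abs_of_nonneg h] at b1 b2 r2
    have hx1 : 0 < 1 + x := by linarith
    have k0 : |dψ x| / N ≤ C / (1 + x) ^ 3 := (div_le_self (abs_nonneg _) hN).trans b2
    have k3 : C / (1 + x) ^ 2 ≤ C / rr x := by
      gcongr
      nlinarith
    have k4 : C / (1 + x) ^ 3 ≤ C / (1 + x) ^ 2 := by
      gcongr
      · linarith
      · norm_num
    have k5 : |1 + x / (2 * N ^ 2)| * |ψ x| ≤ C / (1 + x) ^ 2 := by
      have : |1 + x / (2 * N ^ 2)| ≤ 1 + x := by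
        rw [abs_of_nonneg (by positivity)]
        have : x / (2 * N ^ 2) ≤ x := div_le_self h (by nlinarith)
        linarith
      calc _ ≤ (1 + x) * (C / (1 + x) ^ 3) := by gcongr
        _ = _ := by field_simp
    have k6 : |dψ x / N + (1 + x / (2 * N ^ 2)) * ψ x| ≤ 2 * (C / (1 + x) ^ 2) := by linarith
    refine ⟨by linarith, by linarith, fun _ => k6.trans (le_of_eq (by ring))⟩

lemma A_bd {C N : ℝ} {ψ dψ Φ A : ℝ → ℝ} (hC : 1 ≤ C) (h : WK N ψ dψ Φ) (hb : Bds C N ψ dψ Φ)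
    (hA : ∀ x, HasDerivAt A (dψ x / N + (1 + x / (2 * N ^ 2)) * ψ x) x) {x : ℝ}
    (hx : -(2 * N ^ 2) ≤ x) : |A x - A 0| ≤ 5 * C := by
  have hN := h.hN
  have hN0 : 0 < N := by linarith
  rcases le_total 0 x with h0 | h0
  · have := abs_sub_le_of_deriv (f := A) (f' := fun x => dψ x / N + (1 + x / (2 * N ^ 2)) * ψ x)
      (g := fun u => - (2 * C * (1 + u)⁻¹)) (g' := fun u => 2 * C / (1 + u) ^ 2) h0 (fun u _ => hA u)
      (fun u hu => by
        have hu1 : 1 + u ≠ 0 := by linarith [hu.1]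
        exact (((((hasDerivAt_id u).const_add 1).inv hu1).const_mul (2 * C)).neg).congr_deriv (by
          simp only [id]
          ring))
      (fun u hu => (Pm_bd hC hN hb (by nlinarith [hu.1])).2.2 hu.1)
    refine this.trans ?_
    have : 0 ≤ 2 * C * (1 + x)⁻¹ := by positivity
    simp only [add_zero, inv_one]
    linarith
  · have key := abs_sub_le_of_deriv
      (f := fun u => A u - ψ u / N - (1 + u / (2 * N ^ 2)) * Φ u)
      (f' := fun u => - (Φ u / (2 * N ^ 2)))
      (g := fun u => C / (2 * N ^ 2) * u) (g' := fun _ => C / (2 * N ^ 2)) h0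
      (fun u _ => (((hA u).sub ((h.h1 u).div_const N)).sub
        ((((hasDerivAt_id u).div_const (2 * N ^ 2)).const_add 1).mul (h.h3 u))).congr_deriv (by
          simp only [id]
          ring))
      (fun u _ => ((hasDerivAt_id u).const_mul (C / (2 * N ^ 2))).congr_deriv (by simp))
      (fun u hu => by
        rw [abs_neg, abs_div, abs_of_pos (show 0 < 2 * N ^ 2 by positivity)]
        gcongr
        exact (hb u (by linarith [hu.1])).2.2.2.1)
    have hg : C / (2 * N ^ 2) * 0 - C / (2 * N ^ 2) * x ≤ C := by
      rw [show C / (2 * N ^ 2) * 0 - C / (2 * N ^ 2) * x = C * (-x) / (2 * N ^ 2) by ring,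
        div_le_iff₀ (by positivity)]
      nlinarith
    have bx : ∀ u, -(2 * N ^ 2) ≤ u → |ψ u / N| ≤ C := fun u hu => by
      rw [abs_div, abs_of_pos hN0]
      refine (div_le_self (abs_nonneg _) hN).trans ((hb u hu).1.trans ?_)
      exact div_le_self (by linarith) (rr_one_le u)
    have n0 : -(2 * N ^ 2) ≤ 0 := by nlinarith
    have k2 : |(1 + x / (2 * N ^ 2)) * Φ x| ≤ C := by
      have : -1 ≤ x / (2 * N ^ 2) := by rw [le_div_iff₀ (by positivity)]; linarith
      have : x / (2 * N ^ 2) ≤ 0 := div_nonpos_of_nonpos_of_nonneg h0 (by positivity)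
      rw [abs_mul]
      have : |1 + x / (2 * N ^ 2)| ≤ 1 := by rw [abs_le]; constructor <;> linarith
      calc _ ≤ 1 * C := by gcongr; exact (hb x hx).2.2.2.1
        _ = C := one_mul C
    have k3 := (hb 0 n0).2.2.2.1
    have k4 := bx x hx
    have k5 := bx 0 n0
    have k6 := key.trans hg
    simp only [zero_div, add_zero, one_mul] at k6
    rw [abs_le] at *
    constructor <;> linarith [k2.1, k2.2, k3.1, k3.2, k4.1, k4.2, k5.1, k5.2, k6.1, k6.2]

lemma abs_mul_le {a b A B : ℝ} (ha : |a| ≤ A) (hb : |b| ≤ B) : |a * b| ≤ A * B := by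
  rw [abs_mul]
  exact mul_le_mul ha hb (abs_nonneg _) ((abs_nonneg _).trans ha)

lemma part_iii {C N : ℝ} {ψ dψ Φ J : ℝ → ℝ} (hC : 1 ≤ C) (h : WK N ψ dψ Φ) (hb : Bds C N ψ dψ Φ)
    {x y : ℝ} (hx : -(2 * N ^ 2) ≤ x) (hy : -(2 * N ^ 2) ≤ y)
    (hJ : ∀ u, J u = dslope (fun u => ψ u * dψ x - dψ u * ψ x) x u - 1 / (2 * N) * (ψ u * ψ x)
      + 1 / 2 * (dψ u / N + (1 + u / (2 * N ^ 2)) * ψ u) * Φ x) :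
    |∫ u in x..y, J u| ≤ 100 * C ^ 2 := by
  have hN := h.hN
  have hN0 : 0 < N := by linarith
  have c1 : Continuous ψ := continuous_iff_continuousAt.2 fun x => (h.h1 x).continuousAt
  have c2 : Continuous dψ := continuous_iff_continuousAt.2 fun x => (h.h2 x).continuousAt
  have cP : Continuous (fun u => dψ u / N + (1 + u / (2 * N ^ 2)) * ψ u) := by fun_prop
  have cd : Continuous (dslope (fun u => ψ u * dψ x - dψ u * ψ x) x) := by
    rw [← continuousOn_univ, continuousOn_dslope univ_mem]
    exact ⟨by fun_prop, (((h.h1 x).mul_const _).sub ((h.h2 x).mul_const _)).differentiableAt⟩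
  have hA : ∀ t, HasDerivAt (fun t => ∫ u in (0:ℝ)..t, (dψ u / N + (1 + u / (2 * N ^ 2)) * ψ u))
      (dψ t / N + (1 + t / (2 * N ^ 2)) * ψ t) t := fun t =>
    intervalIntegral.integral_hasDerivAt_right (cP.intervalIntegrable _ _)
        cP.stronglyMeasurable.stronglyMeasurableAtFilter cP.continuousAt
  have hAx := A_bd hC h hb hA hx
  have hAy := A_bd hC h hb hA hy
  have eA := intervalIntegral.integral_eq_sub_of_hasDerivAt (a := x) (b := y) (fun t _ => hA t)
    (cP.intervalIntegrable _ _)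
  have eΦ := intervalIntegral.integral_eq_sub_of_hasDerivAt (a := x) (b := y) (fun t _ => h.h3 t)
    (c1.intervalIntegrable _ _)
  have k := kernel_bd hC h hb hx hy
  have e : ∫ u in x..y, J u = (∫ u in x..y, dslope (fun u => ψ u * dψ x - dψ u * ψ x) x u)
      - 1 / (2 * N) * ψ x * (∫ u in x..y, ψ u)
      + 1 / 2 * Φ x * ∫ u in x..y, (dψ u / N + (1 + u / (2 * N ^ 2)) * ψ u) := by
    rw [← intervalIntegral.integral_const_mul, ← intervalIntegral.integral_const_mul,
      ← intervalIntegral.integral_sub, ← intervalIntegral.integral_add]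
    · congr 1
      funext u
      rw [hJ]
      ring
    all_goals
      apply Continuous.intervalIntegrable
      fun_prop
  rw [e]
  have hΦx := (hb x hx).2.2.2.1
  have hΦy := (hb y hy).2.2.2.1
  have hψx : |ψ x| ≤ C := (hb x hx).1.trans (div_le_self (by linarith) (rr_one_le x))
  have hψN : |1 / (2 * N) * ψ x| ≤ 1 * C := by
    apply abs_mul_le _ hψx
    rw [abs_of_pos (by positivity), div_le_one (by positivity)]; linarith
  have q1 : |∫ u in x..y, ψ u| ≤ 2 * C := by
    rw [eΦ]; rw [abs_le] at *; constructor <;> linarith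
  have q2 : |∫ u in x..y, (dψ u / N + (1 + u / (2 * N ^ 2)) * ψ u)| ≤ 10 * C := by
    rw [eA]; rw [abs_le] at *; constructor <;> linarith
  have q3 : |1 / 2 * Φ x| ≤ 1 / 2 * C := by
    apply abs_mul_le _ hΦx; rw [abs_of_pos] <;> norm_num
  have w1 := abs_mul_le hψN q1
  have w2 := abs_mul_le q3 q2
  refine (abs_add_le _ _).trans ?_
  have := abs_sub (∫ u in x..y, dslope (fun u => ψ u * dψ x - dψ u * ψ x) x u)
    (1 / (2 * N) * ψ x * (∫ u in x..y, ψ u))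
  nlinarith

lemma rr_p {x : ℝ} {p : ℝ} (hp : 0 < p) (hpx : p ^ 4 = |x|) : p ≤ rr x ∧ rr x ≤ 1 + p := by
  have e := rr_pow x
  have r1 := rr_one_le x
  rw [← hpx] at e
  constructor
  · by_contra hh
    push Not at hh
    have : rr x ^ 4 ≤ p ^ 4 := pow_le_pow_left₀ (by linarith) hh.le 4
    linarith
  · by_contra hh
    push Not at hh
    have : (1 + p) ^ 4 ≤ rr x ^ 4 := pow_le_pow_left₀ (by linarith) hh.le 4
    nlinarith [pow_pos hp 2, pow_pos hp 3]

lemma rpow_q {x : ℝ} (hx : x ≠ 0) : ∃ p : ℝ, 0 < p ∧ p ^ 4 = |x| ∧ |x| ^ ((1:ℝ)/4) = p ∧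
    |x| ^ (-(1:ℝ)/4) = 1 / p ∧ |x| ^ ((3:ℝ)/4) = p ^ 3 := by
  have h := abs_pos.2 hx
  refine ⟨|x| ^ ((1:ℝ)/4), by positivity, ?_, rfl, ?_, ?_⟩
  · rw [← Real.rpow_natCast, ← Real.rpow_mul h.le]; norm_num
  · rw [show -(1:ℝ)/4 = -(1/4) by ring, Real.rpow_neg h.le]; exact (one_div _).symm
  · rw [← Real.rpow_natCast, ← Real.rpow_mul h.le]; norm_num

set_option maxHeartbeats 2000000 in
/-- uniform bounds on `J₁ⁿ`, its `y`-derivative, and its primitive (`n` even). -/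
theorem J1N_bounds :
    ∃ C : ℝ, 0 < C ∧ ∀ n : ℕ, 2 ≤ n → Even n → ∀ x y : ℝ,
      -(2 * (n : ℝ) ^ ((2:ℝ)/3)) ≤ x → -(2 * (n : ℝ) ^ ((2:ℝ)/3)) ≤ y →
      x ≠ y → x ≠ 0 → y ≠ 0 →
      |J1N n x y| ≤ C * (Ghat (-(1:ℝ)/4) ((1:ℝ)/4) 1 x y + |x| ^ (-(1:ℝ)/4)) ∧
      |deriv (fun z => J1N n x z) y| ≤
        C * (Ghat (-(1:ℝ)/4) ((1:ℝ)/4) 2 x y + Ghat (-(3:ℝ)/4) ((1:ℝ)/4) 1 x y) ∧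
      |∫ u in x..y, J1N n u x| ≤ C := by
  obtain ⟨C, hC, hB⟩ := WK.bounds
  refine ⟨100 * C ^ 2, by positivity, ?_⟩
  intro n hn he x y hx hy hxy hx0 hy0
  obtain ⟨hW, hP⟩ := psi_setup n hn he
  have hb : Bds C _ _ _ _ := hB _ _ _ _ hW
  have hN2 : (n : ℝ) ^ ((2:ℝ)/3) = ((n : ℝ) ^ ((1:ℝ)/3)) ^ 2 := by
    rw [← Real.rpow_natCast, ← Real.rpow_mul (Nat.cast_nonneg n)]; norm_num
  rw [hN2] at hx hy
  have hJ : ∀ u v, u ≠ v → J1N n u v =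
      (psiN n u * deriv (psiN n) v - deriv (psiN n) u * psiN n v) / (u - v)
      - (1 / (2 * (n : ℝ) ^ ((1:ℝ)/3))) * (psiN n u * psiN n v)
      + (1/2) * psiUp n (n - 1) u * epsPsi n v := by
    intro u v huv
    rw [J1N, KAiN, if_neg huv]
  have hJd : ∀ u, J1N n u u =
      ((deriv (psiN n) u) ^ 2 - psiN n u * deriv (deriv (psiN n)) u
      - (1 / (2 * (n : ℝ) ^ ((1:ℝ)/3))) * (psiN n u) ^ 2)
      + (1/2) * psiUp n (n - 1) u * epsPsi n u := by
    intro u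
    rw [J1N, KAiN, if_pos rfl]
  simp only [hP] at hJ hJd
  set N := (n : ℝ) ^ ((1:ℝ)/3) with hNdef
  set ψ := psiN n
  set dψ := deriv ψ with hdψ
  set Φ := epsPsi n
  have hN := hW.hN
  have hN0 : 0 < N := by linarith
  obtain ⟨p, hp, hp4, hp1, hpm, hp3⟩ := rpow_q hx0
  obtain ⟨w, hw, hw4, hw1, hwm, hw3⟩ := rpow_q hy0
  obtain ⟨rp1, rp2⟩ := rr_p hp hp4
  obtain ⟨rw1, rw2⟩ := rr_p hw hw4
  have rx := rr_one_le x
  have ry := rr_one_le y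
  have hdpos : 0 < |x - y| := abs_pos.2 (sub_ne_zero.2 hxy)
  have hdd : |x - y| ≤ p ^ 4 + w ^ 4 := by rw [hp4, hw4]; exact abs_sub x y
  have G1 : Ghat (-(1:ℝ)/4) ((1:ℝ)/4) 1 x y = (p / w + w / p) / |x - y| := by
    rw [Ghat, Gf, Gf, abs_sub_comm y x, show -(-(1:ℝ)/4) = 1/4 by ring, show -((1:ℝ)/4) = -1/4 by ring,
      hp1, hw1, hpm, hwm, Real.rpow_neg_one]
    field_simp
  have G2 : Ghat (-(1:ℝ)/4) ((1:ℝ)/4) 2 x y = (p / w + w / p) / |x - y| ^ 2 := by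
    rw [Ghat, Gf, Gf, abs_sub_comm y x, show -(-(1:ℝ)/4) = 1/4 by ring, show -((1:ℝ)/4) = -1/4 by ring,
      hp1, hw1, hpm, hwm, Real.rpow_neg hdpos.le, Real.rpow_two]
    field_simp
  have G3 : Ghat (-(3:ℝ)/4) ((1:ℝ)/4) 1 x y = (p ^ 3 / w + w ^ 3 / p) / |x - y| := by
    rw [Ghat, Gf, Gf, abs_sub_comm y x, show -(-(3:ℝ)/4) = 3/4 by ring, show -((1:ℝ)/4) = -1/4 by ring,
      hp3, hw3, hpm, hwm, Real.rpow_neg_one]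
    field_simp
  rw [G1, G2, G3, hpm]
  have rat1 := ratio_le hp hw rx rp1 rw2
  have rat2 := ratio_le hw hp ry rw1 rp2
  obtain ⟨a1, a2, a3, a4, -⟩ := hb x hx
  obtain ⟨b1, b2, b3, b4, -⟩ := hb y hy
  obtain ⟨-, P2, -⟩ := Pm_bd hC hN hb hx
  obtain ⟨Q1, -, -⟩ := Pm_bd hC hN hb hy
  generalize hPm : dψ x / N + (1 + x / (2 * N ^ 2)) * ψ x = Px at *
  set r := rr x
  set s := rr y
  set d := |x - y| with hd
  have hr0 : 0 < r := by linarith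
  have hs0 : 0 < s := by linarith
  have hC0 : 0 < C := by linarith
  have hNhalf : |1 / (2 * N)| ≤ 1 / 2 := by
    rw [abs_of_pos (by positivity)]
    apply one_div_le_one_div_of_le <;> linarith
  have T : |ψ x * dψ y - dψ x * ψ y| ≤ 4 * C ^ 2 * (p / w + w / p) := by
    have t1 := abs_mul_le a1 b2
    have t2 := abs_mul_le a2 b1
    have := abs_sub (ψ x * dψ y) (dψ x * ψ y)
    have e1 : C / r * (C * s) = C ^ 2 * (s / r) := by ring
    have e2 : C * r * (C / s) = C ^ 2 * (r / s) := by ring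
    have f1 : C ^ 2 * (s / r) ≤ C ^ 2 * (2 * (p / w + w / p)) := by gcongr
    have f2 : C ^ 2 * (r / s) ≤ C ^ 2 * (2 * (w / p + p / w)) := by gcongr
    linarith
  have hC2 : C / r ≤ C * (1 / p) := by
    rw [div_eq_mul_one_div]; gcongr
  have hψy : |ψ y| ≤ C := b1.trans (div_le_self (by linarith) ry)
  have hS0 : 0 < p / w + w / p := by positivity
  have hS3 : 0 < p ^ 3 / w + w ^ 3 / p := by positivity
  refine ⟨?_, ?_, ?_⟩
  · rw [hJ x y hxy, hPm]
    have t1 : |(ψ x * dψ y - dψ x * ψ y) / (x - y)| ≤ 4 * C ^ 2 * ((p / w + w / p) / d) := by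
      rw [abs_div, ← hd, ← mul_div_assoc]; gcongr
    have t2 := abs_mul_le hNhalf (abs_mul_le (a1.trans hC2) hψy)
    have t3 : |1 / 2 * Px * Φ y| ≤ 1 / 2 * (3 * (C * (1 / p))) * C := by
      refine abs_mul_le (abs_mul_le ?_ (P2.trans ?_)) b4
      · rw [abs_of_pos]; norm_num
      · linarith
    have t4 := abs_sub ((ψ x * dψ y - dψ x * ψ y) / (x - y)) (1 / (2 * N) * (ψ x * ψ y))
    refine (abs_add_le _ _).trans ?_
    have p1 : 0 ≤ C ^ 2 * ((p / w + w / p) / d) := by positivity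
    have p2 : 0 ≤ C ^ 2 * (1 / p) := by positivity
    linarith
  · have hev : (fun z => J1N n x z) =ᶠ[nhds y] fun z => (ψ x * dψ z - dψ x * ψ z) / (x - z)
      - (1 / (2 * N)) * (ψ x * ψ z) + (1/2) * Px * Φ z := by
      filter_upwards [isOpen_ne.mem_nhds hxy.symm] with z hz
      rw [hJ x z (Ne.symm hz), hPm]
    have hne : x - y ≠ 0 := sub_ne_zero.2 hxy
    have hder : HasDerivAt (fun z => (ψ x * dψ z - dψ x * ψ z) / (x - z)
      - (1 / (2 * N)) * (ψ x * ψ z) + (1/2) * Px * Φ z)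
      ((ψ x * ((y + y ^ 2 / (4 * N ^ 2) - 1 / (2 * N)) * ψ y) - dψ x * dψ y) / (x - y)
        + (ψ x * dψ y - dψ x * ψ y) / (x - y) ^ 2 - (1 / 2) * (ψ x * (dψ y / N)) + (1/2) * Px * ψ y) y := by
      refine (((((((hW.h2 y).const_mul (ψ x)).sub ((hW.h1 y).const_mul (dψ x))).div
        ((hasDerivAt_id y).const_sub x) hne)).sub (((hW.h1 y).const_mul (ψ x)).const_mul (1 / (2 * N)))).add
        ((hW.h3 y).const_mul (1/2 * Px))).congr_deriv ?_
      simp only [id, Pi.sub_apply]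
      field_simp
      ring
    rw [hev.deriv_eq, hder.deriv]
    have t1 : |(ψ x * ((y + y ^ 2 / (4 * N ^ 2) - 1 / (2 * N)) * ψ y) - dψ x * dψ y) / (x - y)| ≤
        12 * C ^ 2 * ((p / w + w / p) / d ^ 2 + (p ^ 3 / w + w ^ 3 / p) / d) := by
      have u1 := abs_mul_le a1 b3
      have u2 := abs_mul_le a2 b2
      have u3 := abs_sub (ψ x * ((y + y ^ 2 / (4 * N ^ 2) - 1 / (2 * N)) * ψ y)) (dψ x * dψ y)
      have u4 := term1_le hp hw hdpos hdd rx ry rp2 rw2 rp1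
      have u5 : C / r * (C * s ^ 3) + C * r * (C * s) = C ^ 2 * (s ^ 3 / r + r * s) := by ring
      have u6 : C ^ 2 * (s ^ 3 / r + r * s) ≤
        C ^ 2 * (12 * ((p ^ 3 / w + w ^ 3 / p) + (p / w + w / p) / d)) := by gcongr
      rw [abs_div, ← hd, div_le_iff₀ hdpos]
      have u7 : 12 * C ^ 2 * ((p / w + w / p) / d ^ 2 + (p ^ 3 / w + w ^ 3 / p) / d) * d =
        C ^ 2 * (12 * ((p ^ 3 / w + w ^ 3 / p) + (p / w + w / p) / d)) := by
        generalize p / w + w / p = S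
        generalize p ^ 3 / w + w ^ 3 / p = S3
        field_simp
        ring
      linarith
    have t2 : |(ψ x * dψ y - dψ x * ψ y) / (x - y) ^ 2| ≤ 4 * C ^ 2 * ((p / w + w / p) / d ^ 2) := by
      rw [abs_div, abs_pow, ← hd, ← mul_div_assoc]; gcongr
    have v := term34_le hp hw hdpos hdd rp1 rw1
    have v2 : C ^ 2 * (1 / (r * s)) ≤ C ^ 2 * ((p ^ 3 / w + w ^ 3 / p) / d) := by gcongr
    have e4 : C / r * (C / s) = C ^ 2 * (1 / (r * s)) := by field_simp
    have hh : |(1:ℝ)/2| ≤ 1/2 := by rw [abs_of_pos]; norm_num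
    have t3 : |1 / 2 * (ψ x * (dψ y / N))| ≤ 1 / 2 * (C / r * (2 * (C / s))) := by
      refine abs_mul_le hh (abs_mul_le a1 ?_)
      rwa [abs_div, abs_of_pos hN0]
    have t4 : |1 / 2 * Px * ψ y| ≤ 1 / 2 * (3 * (C / r)) * (C / s) := abs_mul_le (abs_mul_le hh P2) b1
    have p1 : 0 ≤ C ^ 2 * ((p / w + w / p) / d ^ 2) := by positivity
    have p2 : 0 ≤ C ^ 2 * ((p ^ 3 / w + w ^ 3 / p) / d) := by positivity
    refine (abs_add_le _ _).trans ?_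
    have z1 := abs_sub ((ψ x * ((y + y ^ 2 / (4 * N ^ 2) - 1 / (2 * N)) * ψ y) - dψ x * dψ y) / (x - y)
        + (ψ x * dψ y - dψ x * ψ y) / (x - y) ^ 2) (1 / 2 * (ψ x * (dψ y / N)))
    have z2 := abs_add_le ((ψ x * ((y + y ^ 2 / (4 * N ^ 2) - 1 / (2 * N)) * ψ y) - dψ x * dψ y) / (x - y))
        ((ψ x * dψ y - dψ x * ψ y) / (x - y) ^ 2)
    linarith
  · refine part_iii hC hW hb hx hy ?_
    intro u
    by_cases hux : u = x
    · subst hux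
      have hdd2 : HasDerivAt (fun v => ψ v * dψ u - dψ v * ψ u) (dψ u * dψ u -
          (u + u ^ 2 / (4 * N ^ 2) - 1 / (2 * N)) * ψ u * ψ u) u :=
        ((hW.h1 u).mul_const (dψ u)).sub ((hW.h2 u).mul_const (ψ u))
      rw [hJd, dslope_same, hdd2.deriv, (hW.h2 u).deriv]
      ring
    · rw [hJ u x hux, dslope_of_ne _ hux, slope_def_field]
      ring
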